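/- Let Ω be a bounded open convex set in ℝ² containing the origin in its interior. Assume ∂Ω is C¹ and, in an arclength parametrization, the components of the unit tangent vector are absolutely continuous, so the curvature κ is defined almost everywhere as an L¹ function on ∂Ω. Assume there are a > 0 and γ > 0 with κ(x) ≥ a for almost every x ∈ ∂Ω and ∫_{∂Ω} κ (log(2+κ))^{γ} dσ < ∞ (i.e. κ ∈ L log^γ L(∂Ω)). Let Ω* = {ξ ∈ ℝ² : ρ*(ξ) ≤ 1} be the polar set and E_{Ω*}(t) = card(tΩ* ∩ ℤ²) − t²·area(Ω*). Then there is a constant C such that |E_{Ω*}(t)| ≤ C t (log t)^{−γ/2} for all t ≥ 2. -/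

import Mathlib

/-!
The dilate `t • Ω*` is the sublevel set `ρ* ≤ t` of the support function. The lower bound on the
curvature makes `Ω` uniformly convex (`Body.strong_convex`). Dually, near a point `x` with outer
direction `n s` the function `ρ*` differs from the linear function `⟪γ s, ·⟫` by a quadratic error
`O(‖y - x‖ ^ 2 / ‖x‖)` (`Body.supp_quad`). So, in a box of side `N ^ 6` with `N ≈ t ^ (1 / 13)`
that meets the boundary of `t • Ω*`, this set is a half-plane with normal `γ s` up to a strip of
width `O(1 / N)`.

The plane is tiled by such boxes. Boxes inside or outside `t • Ω*` contribute nothing to the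
lattice rest. In a boundary box the lattice points are counted column by column, which leaves a sum
of terms `1 / 2 - fract (c - θ k)`, with `θ` the slope of the half-plane. If `θ` has a Dirichlet
approximation whose denominator is between `N` and `N ^ 5`, this sum is `O(N ^ 5)`
(`sum_colErr_good`); in any case it is `O(N ^ 6)`. Such an approximation exists unless `γ s` is
almost orthogonal to a nonzero integer vector with entries at most `N` (`BadDir`,
`dirichlet_slope`, `Body.box_bound`).

It remains to count boxes. The normal direction of the boundary of `t • Ω*` runs through the points
`γ s`, while its points have directions `n s`, and the variation of `n` over an arc is at most the
total curvature of this arc. Hence the number of boundary boxes belonging to a union of parameter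
arcs is at most about `t / N ^ 6` times its total curvature, plus the number of arcs
(`Body.count_cells`). Two normals almost orthogonal to the same integer vector are almost parallel,
so bad normals lie in only `O(N ^ 2)` of the `N ^ 5` equal cells of the parameter interval
(`Body.count_bad`). Truncating the curvature at height `N` and using the `L log^g L` hypothesis,
the total curvature of the bad cells is `O(N ^ (-2) + log (2 + N) ^ (-g))` (`Body.curv_cells`).
Summation gives `|E(t)| ≤ C t (1 / N + log (2 + N) ^ (-g))` (`Body.rest_bound`). This is of order
`t (log t) ^ (-g)`, which is stronger than the claim.
-/

open MeasureTheory Set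
open scoped Pointwise RealInnerProductSpace NNReal ENNReal

noncomputable section

abbrev E2 := EuclideanSpace ℝ (Fin 2)

/-- The embedding of an integer vector into the Euclidean plane. -/
def ek (k : Fin 2 → ℤ) : E2 := (WithLp.equiv 2 (Fin 2 → ℝ)).symm fun i => (k i : ℝ)

/-- Number of lattice points in a set. -/
def latticeCount (S : Set E2) : ℕ := Nat.card {k : Fin 2 → ℤ | ek k ∈ S}

/-- The lattice rest `E_Ω(t) = card(tΩ ∩ ℤ²) − t²·area(Ω)`. -/
def latticeRest (Ω : Set E2) (t : ℝ) : ℝ :=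
  (latticeCount (t • Ω) : ℝ) - t ^ 2 * (volume Ω).toReal

/-- The mean square discrepancy `𝒢_Ω(R,h) = ((1/h)∫_R^{R+h} |E_Ω(t)|² dt)^{1/2}`. -/
def meanSquare (Ω : Set E2) (R h : ℝ) : ℝ :=
  Real.sqrt ((1 / h) * ∫ t in R..(R + h), (latticeRest Ω t) ^ 2)

/-- The support function `ρ*(ξ) = sup {⟨x,ξ⟩ : x ∈ Ω}`. -/
def suppFn (Ω : Set E2) (ξ : E2) : ℝ := sSup ((fun x => ⟪x, ξ⟫) '' Ω)

/-- `μ(θ,δ)`, the diameter of the cap `𝒞(θ,δ) = {x ∈ ∂Ω : ⟨x,θ⟩ ≥ ρ*(θ) − δ}`. -/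
def capDiam (Ω : Set E2) (θ : E2) (δ : ℝ) : ℝ :=
  Metric.diam {x ∈ frontier Ω | suppFn Ω θ - δ ≤ ⟪x, θ⟫}

/-- Curvature bounded below in the generalized sense:
`sup_{θ∈S¹} sup_{δ>0} δ^{-1/2} μ(θ,δ) < ∞`. -/
def CurvBddBelow (Ω : Set E2) : Prop :=
  ∃ K : ℝ, ∀ θ : E2, ‖θ‖ = 1 → ∀ δ : ℝ, 0 < δ → capDiam Ω θ δ ≤ K * Real.sqrt δ

/-- `γ` is an arclength (unit-speed) parametrization of the `C¹` boundary `∂Ω`, with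
period `L`, whose unit tangent vector `γ'` is absolutely continuous with almost-everywhere
derivative `γ''`; the curvature is then `κ = ‖γ''‖`, defined a.e. as an `L¹` function. -/
def BoundaryParam (Ω : Set E2) (γ γ' γ'' : ℝ → E2) (L : ℝ) : Prop :=
  0 < L ∧ (∀ t, HasDerivAt γ (γ' t) t) ∧ Continuous γ' ∧ (∀ t, ‖γ' t‖ = 1) ∧
    Function.Periodic γ L ∧ γ '' Set.Ico 0 L = frontier Ω ∧ Set.InjOn γ (Set.Ico 0 L) ∧
    (∀ t : ℝ, IntervalIntegrable γ'' volume 0 t) ∧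
    (∀ t : ℝ, γ' t = γ' 0 + ∫ s in (0:ℝ)..t, γ'' s)

/-- The polar set `Ω* = {ξ : ρ*(ξ) ≤ 1}`. -/
def polarSet (Ω : Set E2) : Set E2 := {ξ | suppFn Ω ξ ≤ 1}

/-! ### Sums of fractional parts -/

/-- Over a full period the residues of `p * k` modulo `q` run through `0, …, q - 1`, and the fractional
parts are within `2 / q` of the corresponding multiples of `1 / q`, except at the residues `0` and
`q - 1`, where they may wrap around. -/
lemma fract_block (c θ : ℝ) (p : ℤ) (q : ℕ) (hq : 0 < q) (hcop : IsCoprime p (q : ℤ))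
    (h : |θ - p / q| ≤ 1 / (q : ℝ) ^ 2) :
    |∑ k ∈ Finset.range q, (1 / 2 - Int.fract (c - θ * k))| ≤ 6 := by
  have hq0 : (0 : ℝ) < q := by exact_mod_cast hq
  have hqz : (0 : ℤ) < q := by exact_mod_cast hq
  set C0 : ℤ := ⌊c * q⌋ with hC0
  set r : ℕ → ℕ := fun k => ((C0 - p * k) % (q : ℤ)).toNat with hr
  have hrz : ∀ k, ((r k : ℕ) : ℤ) = (C0 - p * k) % (q : ℤ) := fun k =>
    Int.toNat_of_nonneg (Int.emod_nonneg _ hqz.ne')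
  have hrlt : ∀ k, r k < q := by
    intro k
    have := Int.emod_lt_of_pos (C0 - p * k) hqz
    rw [← hrz] at this
    exact_mod_cast this
  have hinj : Set.InjOn r (Finset.range q : Set ℕ) := by
    intro k hk k' hk' hkk
    simp only [Finset.coe_range, Set.mem_Iio] at hk hk'
    have h1 : (C0 - p * k) % (q : ℤ) = (C0 - p * k') % (q : ℤ) := by
      rw [← hrz, ← hrz, hkk]
    have h2 : (q : ℤ) ∣ p * ((k' : ℤ) - k) := by
      have := Int.ModEq.dvd (show (C0 - p * k' : ℤ) ≡ (C0 - p * k) [ZMOD q] from h1.symm)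
      convert this using 1; ring
    have h3 : (q : ℤ) ∣ (k' : ℤ) - k := hcop.symm.dvd_of_dvd_mul_left h2
    have h4 := Int.eq_zero_of_abs_lt_dvd h3 (by rw [abs_lt]; constructor <;> omega)
    omega
  have himg : (Finset.range q).image r = Finset.range q := by
    apply Finset.eq_of_subset_of_card_le
    · intro x hx
      simp only [Finset.mem_image, Finset.mem_range] at hx ⊢
      obtain ⟨k, _, rfl⟩ := hx
      exact hrlt k
    · rw [Finset.card_image_of_injOn hinj]
  have hperm : ∀ g : ℕ → ℝ, ∑ k ∈ Finset.range q, g (r k) = ∑ k ∈ Finset.range q, g k := by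
    intro g
    conv_rhs => rw [← himg]
    rw [Finset.sum_image hinj]
  have key : ∀ k ∈ Finset.range q, |(r k : ℝ) / q - Int.fract (c - θ * k)| ≤
      2 / q + ((if r k = 0 then 1 else 0) + (if r k = q - 1 then (1:ℝ) else 0)) := by
    intro k hk
    have hk : k < q := by simpa using hk
    obtain ⟨w, hw⟩ : ∃ w : ℤ, C0 - p * k = r k + q * w := by
      refine ⟨(C0 - p * k) / q, ?_⟩
      rw [hrz]; exact (Int.emod_add_mul_ediv _ _).symm
    have hwR : (C0 : ℝ) - p * k = r k + q * w := by exact_mod_cast hw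
    set e : ℝ := Int.fract (c * q) / q - (θ - p / q) * k with he
    have hx : c - θ * k = (r k / q + e) + w := by
      have : (C0 : ℝ) + Int.fract (c * q) = c * q := Int.floor_add_fract _
      rw [he]
      field_simp
      linear_combination (-1 : ℝ) * this + hwR
    have he1 : |(θ - p / q) * k| ≤ 1 / q := by
      rw [abs_mul, Nat.abs_cast]
      calc |θ - p / q| * k ≤ 1 / (q : ℝ) ^ 2 * q := by gcongr
        _ = 1 / q := by field_simp
    have hf0 := Int.fract_nonneg (c * q)
    have hf1 := Int.fract_lt_one (c * q)
    have hf2 : Int.fract (c * q) / q < 1 / q := by gcongr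
    have hf3 : 0 ≤ Int.fract (c * q) / q := by positivity
    rw [abs_le] at he1
    have hone : 0 < 1 / (q : ℝ) := by positivity
    have h2q : 2 / (q : ℝ) = 2 * (1 / q) := by ring
    have hfr : Int.fract (c - θ * k) = Int.fract (r k / q + e) := by
      rw [hx, Int.fract_add_intCast]
    rw [hfr]
    have hrle : (r k : ℝ) / q ≤ 1 := by
      rw [div_le_one hq0]; exact_mod_cast (hrlt k).le
    have hr0 : 0 ≤ (r k : ℝ) / q := by positivity
    have hg0 := Int.fract_nonneg (r k / q + e)
    have hg1 := Int.fract_lt_one (r k / q + e)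
    have triv : |(r k : ℝ) / q - Int.fract (r k / q + e)| ≤ 1 := by
      rw [abs_le]; constructor <;> linarith
    by_cases ha : r k = 0
    · rw [if_pos ha]
      have : (0 : ℝ) ≤ (if r k = q - 1 then (1:ℝ) else 0) := by split_ifs <;> norm_num
      linarith
    by_cases hb : r k = q - 1
    · rw [if_pos hb, if_neg ha]; linarith
    rw [if_neg ha, if_neg hb]
    have h1 : 1 / (q : ℝ) ≤ r k / q := by
      have : (1 : ℝ) ≤ r k := by exact_mod_cast Nat.one_le_iff_ne_zero.2 ha
      gcongr
    have h2 : (r k : ℝ) / q + 2 * (1 / q) ≤ 1 := by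
      have : (r k : ℝ) + 2 ≤ q := by
        have := hrlt k
        exact_mod_cast (by omega : r k + 2 ≤ q)
      rw [show (r k : ℝ) / q + 2 * (1 / q) = (r k + 2) / q by ring, div_le_one hq0]
      exact this
    rw [Int.fract_eq_self.2 ⟨by linarith, by linarith⟩]
    rw [abs_le]; constructor <;> linarith
  have hsum : ∑ k ∈ Finset.range q, (1 / 2 - (r k : ℝ) / q) = 1 / 2 := by
    rw [hperm (fun k => 1 / 2 - (k : ℝ) / q)]
    rw [Finset.sum_sub_distrib, ← Finset.sum_div (Finset.range q) (fun k : ℕ => (k : ℝ)), ← Nat.cast_sum]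
    have := Finset.sum_range_id_mul_two q
    have h' : ((∑ i ∈ Finset.range q, i : ℕ) : ℝ) * 2 = q * (q - 1) := by
      have h2 : (((∑ i ∈ Finset.range q, i) * 2 : ℕ) : ℝ) = ((q * (q - 1) : ℕ) : ℝ) := by
        rw [this]
      push_cast [Nat.cast_sub (Nat.one_le_iff_ne_zero.2 hq.ne')] at h2
      push_cast; linarith
    simp only [Finset.sum_const, Finset.card_range, nsmul_eq_mul]
    field_simp
    linarith
  have hsplit : ∑ k ∈ Finset.range q, (1 / 2 - Int.fract (c - θ * k)) =
      1 / 2 + ∑ k ∈ Finset.range q, ((r k : ℝ) / q - Int.fract (c - θ * k)) := by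
    conv_rhs => rw [← hsum]
    rw [← Finset.sum_add_distrib]
    apply Finset.sum_congr rfl; intros; ring
  rw [hsplit]
  have hb : |∑ k ∈ Finset.range q, ((r k : ℝ) / q - Int.fract (c - θ * k))| ≤ 4 := by
    refine (Finset.abs_sum_le_sum_abs _ _).trans ((Finset.sum_le_sum key).trans ?_)
    rw [hperm (fun k => 2 / (q:ℝ) + ((if k = 0 then 1 else 0) + (if k = q - 1 then (1:ℝ) else 0)))]
    rw [Finset.sum_add_distrib, Finset.sum_add_distrib]
    simp only [Finset.sum_const, Finset.card_range, nsmul_eq_mul, Finset.sum_ite_eq',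
      Finset.mem_range]
    rw [if_pos hq, if_pos (by omega)]
    have : (q : ℝ) * (2 / q) = 2 := by field_simp
    linarith
  rw [abs_le] at hb ⊢
  constructor <;> linarith

/-- Split into blocks of length `q`, to which `fract_block` applies, and a remainder of less than `q`
terms. -/
lemma fract_sum (θ : ℝ) (p : ℤ) (q : ℕ) (hq : 0 < q) (hcop : IsCoprime p (q : ℤ))
    (h : |θ - p / q| ≤ 1 / (q : ℝ) ^ 2) (N : ℕ) (c : ℝ) :
    |∑ k ∈ Finset.range N, (1 / 2 - Int.fract (c - θ * k))| ≤ 6 * (N / q) + q := by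
  have hq0 : (0 : ℝ) < q := by exact_mod_cast hq
  induction N using Nat.strong_induction_on generalizing c with
  | _ N ih =>
    by_cases hN : N < q
    · have : |∑ k ∈ Finset.range N, (1 / 2 - Int.fract (c - θ * k))| ≤ N := by
        refine (Finset.abs_sum_le_sum_abs _ _).trans ?_
        refine (Finset.sum_le_card_nsmul _ _ 1 ?_).trans (by simp)
        intro k _
        have hg0 := Int.fract_nonneg (c - θ * k)
        have hg1 := Int.fract_lt_one (c - θ * k)
        rw [abs_le]; constructor <;> linarith
      have h1 : (N : ℝ) ≤ q := by exact_mod_cast hN.le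
      have h2 : 0 ≤ 6 * ((N : ℝ) / q) := by positivity
      linarith
    · push Not at hN
      obtain ⟨N', rfl⟩ := Nat.exists_eq_add_of_le hN
      rw [Finset.sum_range_add]
      have h1 := fract_block c θ p q hq hcop h
      have h2 := ih N' (by omega) (c - θ * q)
      have h3 : ∀ k : ℕ, c - θ * ((q + k : ℕ) : ℝ) = c - θ * q - θ * k := by
        intro k; push_cast; ring
      simp only [h3]
      refine (abs_add_le _ _).trans ?_
      have h4 : (((q + N' : ℕ) : ℝ)) / q = 1 + N' / q := by push_cast; field_simp
      rw [h4]; linarith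

lemma card_le_of_close (S : Finset ℤ) (D : ℕ)
    (h : ∀ a ∈ S, ∀ b ∈ S, b ≤ a + D) : S.card ≤ D + 1 := by
  rcases S.eq_empty_or_nonempty with rfl | hS
  · simp
  · have : S ⊆ Finset.Icc (S.min' hS) (S.min' hS + D) := by
      intro b hb
      rw [Finset.mem_Icc]
      exact ⟨S.min'_le b hb, h _ (S.min'_mem hS) b hb⟩
    refine (Finset.card_le_card this).trans ?_
    simp
    omega

/-! ### Columns of a half-plane in a box -/

lemma card_le_of_close_nat (S : Finset ℕ) (D : ℕ)
    (h : ∀ a ∈ S, ∀ b ∈ S, b ≤ a + D) : S.card ≤ D + 1 := by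
  rcases S.eq_empty_or_nonempty with rfl | hS
  · simp
  · have : S ⊆ Finset.Icc (S.min' hS) (S.min' hS + D) := by
      intro b hb
      rw [Finset.mem_Icc]
      exact ⟨S.min'_le b hb, h _ (S.min'_mem hS) b hb⟩
    refine (Finset.card_le_card this).trans ?_
    simp
    omega

/-- Number of integers in `[0, H)` that are at most `u`: the lattice points of a column of height `H`
below height `u`. -/
def colCnt (H : ℕ) (u : ℝ) : ℕ := ((Finset.range H).filter (fun l : ℕ => (l : ℝ) ≤ u)).card

/-- Length of the part of `[-1/2, H - 1/2)` below `u`. -/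
def colLen (H : ℕ) (u : ℝ) : ℝ := max 0 (min (u + 1 / 2) H)

lemma colLen_mono (H : ℕ) : Monotone (colLen H) := by
  intro u v h
  unfold colLen
  gcongr

lemma colLen_lip (H : ℕ) (u v : ℝ) : |colLen H u - colLen H v| ≤ |u - v| := by
  unfold colLen
  have h1 := abs_max_sub_max_le_abs (min (u + 1 / 2) (H:ℝ)) (min (v + 1 / 2) (H:ℝ)) 0
  have h2 := abs_inf_sub_inf_le_abs (u + 1 / 2) (v + 1 / 2) (H:ℝ)
  rw [max_comm, max_comm (0:ℝ) (min (v+1/2) _)]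
  refine h1.trans (h2.trans (le_of_eq ?_))
  congr 1; ring

lemma colLen_cont (H : ℕ) : Continuous (colLen H) := by
  unfold colLen; fun_prop

lemma colCnt_low {H : ℕ} {u : ℝ} (h : u < 0) : colCnt H u = 0 := by
  unfold colCnt
  rw [Finset.card_eq_zero, Finset.filter_eq_empty_iff]
  intro l _ hl
  have : (0:ℝ) ≤ l := Nat.cast_nonneg l
  linarith

lemma colCnt_high {H : ℕ} {u : ℝ} (h : (H : ℝ) - 1 ≤ u) : colCnt H u = H := by
  unfold colCnt
  rw [Finset.filter_true_of_mem, Finset.card_range]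
  intro l hl
  have : l + 1 ≤ H := by simpa using hl
  have : (l : ℝ) + 1 ≤ H := by exact_mod_cast this
  linarith

lemma colCnt_mid {H : ℕ} {u : ℝ} (h0 : 0 ≤ u) (h : u < H) : colCnt H u = ⌊u⌋₊ + 1 := by
  unfold colCnt
  have : (Finset.range H).filter (fun l : ℕ => (l : ℝ) ≤ u) = Finset.range (⌊u⌋₊ + 1) := by
    ext l
    simp only [Finset.mem_filter, Finset.mem_range, Nat.lt_succ_iff, Nat.le_floor_iff h0]
    constructor
    · exact fun h => h.2
    · intro hl
      refine ⟨?_, hl⟩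
      exact_mod_cast lt_of_le_of_lt hl h
  rw [this, Finset.card_range]

lemma colCnt_sub_colLen (H : ℕ) (u : ℝ) : |(colCnt H u : ℝ) - colLen H u| ≤ 1 := by
  have hH : (0:ℝ) ≤ H := Nat.cast_nonneg H
  unfold colLen
  rcases lt_or_ge u 0 with h | h
  · rw [colCnt_low h, abs_le]
    have h1 := min_le_left (u + 1/2) (H:ℝ)
    have h2 := le_max_left (0:ℝ) (min (u + 1 / 2) (H:ℝ))
    have : max (0:ℝ) (min (u + 1 / 2) H) ≤ 1 := max_le (by norm_num) (by linarith)
    push_cast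
    constructor <;> linarith
  · rcases lt_or_ge u H with h' | h'
    · rw [colCnt_mid h h']
      have h1 := Nat.floor_le h
      have h2 := Nat.lt_floor_add_one u
      have h3 : max (0:ℝ) (min (u + 1 / 2) H) ≤ u + 1 / 2 :=
        max_le (by linarith) (min_le_left _ _)
      have h4 : u ≤ max (0:ℝ) (min (u + 1 / 2) H) :=
        le_max_of_le_right (le_min (by linarith) h'.le)
      push_cast
      rw [abs_le]; constructor <;> linarith
    · rw [colCnt_high (by linarith), min_eq_right (by linarith), max_eq_right hH]
      simp

/-- Lattice points minus area, in the `k`-th column of unit width, for the region below the line of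
height `c - θ * x`. The columns are centred at the integers. -/
def colErr (H : ℕ) (c θ : ℝ) (k : ℕ) : ℝ :=
  (colCnt H (c - θ * k) : ℝ) - ∫ x in ((k : ℝ) - 1 / 2)..(k + 1 / 2), colLen H (c - θ * x)

lemma colLen_intble (H : ℕ) (c θ a b : ℝ) :
    IntervalIntegrable (fun x => colLen H (c - θ * x)) volume a b :=
  ((colLen_cont H).comp (by fun_prop)).intervalIntegrable _ _

lemma colErr_triv (H : ℕ) (c θ : ℝ) (hθ : |θ| ≤ 1) (k : ℕ) : |colErr H c θ k| ≤ 2 := by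
  have h1 := colCnt_sub_colLen H (c - θ * k)
  have h2 : |∫ x in ((k : ℝ) - 1 / 2)..(k + 1 / 2), (colLen H (c - θ * x) - colLen H (c - θ * k))|
      ≤ 1 * |((k : ℝ) + 1 / 2) - (k - 1 / 2)| := by
    rw [← Real.norm_eq_abs]
    apply intervalIntegral.norm_integral_le_of_norm_le_const
    intro x hx
    rw [uIoc_of_le (by linarith)] at hx
    rw [Real.norm_eq_abs]
    refine (colLen_lip _ _ _).trans ?_
    rw [show c - θ * x - (c - θ * k) = θ * (k - x) by ring, abs_mul]
    have : |(k:ℝ) - x| ≤ 1 := by rw [abs_le]; constructor <;> linarith [hx.1, hx.2]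
    calc |θ| * |(k:ℝ) - x| ≤ 1 * 1 := by gcongr
      _ = 1 := by norm_num
  rw [intervalIntegral.integral_sub (colLen_intble _ _ _ _ _) (by simp),
    intervalIntegral.integral_const] at h2
  rw [show ((k : ℝ) + 1 / 2) - (k - 1 / 2) = 1 by ring, abs_one, one_smul] at h2
  unfold colErr
  rw [abs_le] at *
  constructor <;> linarith [h1.1, h1.2, h2.1, h2.2]

lemma colErr_low (H : ℕ) (c θ : ℝ) (hθ : |θ| ≤ 1) (k : ℕ) (h : c - θ * k < -1) :
    colErr H c θ k = 0 := by
  unfold colErr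
  rw [colCnt_low (by linarith)]
  rw [intervalIntegral.integral_congr (g := fun _ => (0:ℝ))]
  · simp
  · intro x hx
    rw [uIcc_of_le (by linarith)] at hx
    have : |θ * (k - x)| ≤ 1 / 2 := by
      have : |(k:ℝ) - x| ≤ 1/2 := by rw [abs_le]; constructor <;> linarith [hx.1, hx.2]
      rw [abs_mul]
      calc |θ| * |(k:ℝ) - x| ≤ 1 * (1/2) := by gcongr
        _ = 1/2 := by norm_num
    have h2 := (abs_le.1 this).2
    unfold colLen
    apply max_eq_left
    refine (min_le_left _ _).trans ?_
    nlinarith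

lemma colErr_high (H : ℕ) (c θ : ℝ) (hθ : |θ| ≤ 1) (k : ℕ) (h : H < c - θ * k) :
    colErr H c θ k = 0 := by
  unfold colErr
  rw [colCnt_high (by linarith)]
  rw [intervalIntegral.integral_congr (g := fun _ => (H:ℝ))]
  · rw [intervalIntegral.integral_const]; simp; ring
  · intro x hx
    rw [uIcc_of_le (by linarith)] at hx
    have : |θ * (k - x)| ≤ 1 / 2 := by
      have : |(k:ℝ) - x| ≤ 1/2 := by rw [abs_le]; constructor <;> linarith [hx.1, hx.2]
      rw [abs_mul]
      calc |θ| * |(k:ℝ) - x| ≤ 1 * (1/2) := by gcongr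
        _ = 1/2 := by norm_num
    have h2 := (abs_le.1 this).1
    show max 0 (min (c - θ * x + 1/2) (H:ℝ)) = H
    rw [min_eq_right (by nlinarith), max_eq_right (Nat.cast_nonneg H)]

/-- In a column which the line crosses away from the top and the bottom of the box, the length is affine
in `x`, and its integral is its value at the centre. -/
lemma colErr_mid (H : ℕ) (c θ : ℝ) (hθ : |θ| ≤ 1) (k : ℕ) (h1 : 1 ≤ c - θ * k)
    (h2 : c - θ * k ≤ H - 2) :
    colErr H c θ k = 1 / 2 - Int.fract (c - θ * k) := by
  unfold colErr
  rw [colCnt_mid (by linarith) (by linarith)]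
  rw [intervalIntegral.integral_congr (g := fun x => (c - θ * x + 1/2))]
  · have : ∫ x in ((k : ℝ) - 1 / 2)..(k + 1 / 2), (c - θ * x + 1/2) = c - θ * k + 1/2 := by
      rw [intervalIntegral.integral_add (by apply Continuous.intervalIntegrable; fun_prop) (by simp),
        intervalIntegral.integral_sub (by simp) (by apply Continuous.intervalIntegrable; fun_prop),
        intervalIntegral.integral_const_mul, integral_id]
      simp only [intervalIntegral.integral_const, smul_eq_mul]
      ring
    rw [this]
    have h3 := Int.floor_add_fract (c - θ * k)
    have h4 : ((⌊c - θ * k⌋₊ : ℕ) : ℝ) = (⌊c - θ * k⌋ : ℝ) := by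
      rw [← natCast_floor_eq_intCast_floor (by linarith)]
    push_cast
    rw [h4]
    linarith
  · intro x hx
    rw [uIcc_of_le (by linarith)] at hx
    have : |θ * (k - x)| ≤ 1 / 2 := by
      have : |(k:ℝ) - x| ≤ 1/2 := by rw [abs_le]; constructor <;> linarith [hx.1, hx.2]
      rw [abs_mul]
      calc |θ| * |(k:ℝ) - x| ≤ 1 * (1/2) := by gcongr
        _ = 1/2 := by norm_num
    have h3 := abs_le.1 this
    show max 0 (min (c - θ * x + 1/2) (H:ℝ)) = c - θ * x + 1/2
    rw [min_eq_left (by nlinarith [h3.1, h3.2]), max_eq_right (by nlinarith [h3.1, h3.2])]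

lemma sum_colErr (H : ℕ) (c θ : ℝ) :
    ∑ k ∈ Finset.range H, colErr H c θ k =
      ∑ k ∈ Finset.range H, (colCnt H (c - θ * k) : ℝ)
        - ∫ x in (-1/2 : ℝ)..(H - 1 / 2), colLen H (c - θ * x) := by
  unfold colErr
  rw [Finset.sum_sub_distrib]
  congr 1
  have := intervalIntegral.sum_integral_adjacent_intervals (μ := volume)
    (f := fun x => colLen H (c - θ * x)) (a := fun k : ℕ => (k : ℝ) - 1/2) (n := H)
    (fun k _ => colLen_intble _ _ _ _ _)
  rw [show (-1/2 : ℝ) = ((0:ℕ):ℝ) - 1/2 by norm_num, ← this]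
  apply Finset.sum_congr rfl
  intro k _
  push_cast
  congr 1
  ring

lemma sum_colErr_triv (H : ℕ) (c θ : ℝ) (hθ : |θ| ≤ 1) :
    |∑ k ∈ Finset.range H, colErr H c θ k| ≤ 2 * H := by
  refine (Finset.abs_sum_le_sum_abs _ _).trans ?_
  refine (Finset.sum_le_card_nsmul _ _ 2 fun k _ => colErr_triv H c θ hθ k).trans ?_
  simp; linarith

/-- A line of slope at least `1 / (2 * q)` in absolute value has height within `1` of a given level
in at most `4 * q + 1` columns. -/
lemma card_window (θ c w : ℝ) (q : ℕ) (hq : 0 < q) (hθ : 1 / (2 * (q:ℝ)) ≤ |θ|) (S : Finset ℕ)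
    (hS : ∀ k ∈ S, |c - θ * k - w| ≤ 1) : S.card ≤ 4 * q + 1 := by
  have hq0 : (0 : ℝ) < q := by exact_mod_cast hq
  apply card_le_of_close_nat
  intro a ha b hb
  have h1 := abs_le.1 (hS a ha)
  have h2 := abs_le.1 (hS b hb)
  have h3 : |θ * ((b:ℝ) - a)| ≤ 2 := by
    rw [abs_le]; constructor <;> nlinarith [h1.1, h1.2, h2.1, h2.2]
  rw [abs_mul] at h3
  have h4 : 1 / (2 * (q:ℝ)) * |(b:ℝ) - a| ≤ 2 := le_trans (by gcongr) h3
  rw [div_mul_eq_mul_div, div_le_iff₀ (by positivity)] at h4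
  have h5 := le_abs_self ((b:ℝ) - a)
  have : (b:ℝ) ≤ a + 4 * q := by linarith
  exact_mod_cast this

/-- The columns where the line is inside the box form an interval, over which `fract_sum` applies; the
columns above and below contribute nothing, and few columns lie near the top or the bottom. -/
lemma sum_colErr_good (H : ℕ) (c θ : ℝ) (hθ : |θ| ≤ 1) (p : ℤ) (q : ℕ) (hq : 2 ≤ q)
    (hcop : IsCoprime p (q : ℤ)) (h : |θ - p / q| ≤ 1 / (q : ℝ) ^ 2) :
    |∑ k ∈ Finset.range H, colErr H c θ k| ≤ 6 * (H / q) + 21 * q := by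
  classical
  have hq0 : (0 : ℝ) < q := by exact_mod_cast (by omega : 0 < q)
  have hq2 : (2 : ℝ) ≤ q := by exact_mod_cast hq
  have hp : p ≠ 0 := by
    rintro rfl
    rw [isCoprime_zero_left, Int.isUnit_iff] at hcop
    omega
  have hθ' : 1 / (2 * (q:ℝ)) ≤ |θ| := by
    have h1 : (1:ℝ) ≤ |(p:ℝ)| := by exact_mod_cast Int.one_le_abs hp
    have h2 : |(p:ℝ) / q| ≤ |θ| + |θ - p / q| := by
      have := abs_sub_abs_le_abs_sub ((p:ℝ)/q) θ
      rw [abs_sub_comm] at this; linarith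
    rw [abs_div, Nat.abs_cast] at h2
    have h3 : 1 / (q:ℝ) ≤ |(p:ℝ)| / q := by gcongr
    have h4 : 1 / (q:ℝ)^2 ≤ 1 / (2 * q) := by
      apply one_div_le_one_div_of_le (by positivity); nlinarith
    have h5 : 1 / (q:ℝ) = 1 / (2*q) + 1 / (2*q) := by field_simp; norm_num
    linarith
  set u : ℕ → ℝ := fun k => c - θ * k with hu
  set S0 := (Finset.range H).filter (fun k => 1 ≤ u k ∧ u k ≤ H - 2) with hS0
  set S1 := (Finset.range H).filter (fun k => |u k - 0| ≤ 1) with hS1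
  set S2 := (Finset.range H).filter (fun k => |u k - (H - 1)| ≤ 1) with hS2
  have hS1c : S1.card ≤ 4 * q + 1 :=
    card_window θ c 0 q (by omega) hθ' S1 (fun k hk => (Finset.mem_filter.1 hk).2)
  have hS2c : S2.card ≤ 4 * q + 1 :=
    card_window θ c (H-1) q (by omega) hθ' S2 (fun k hk => (Finset.mem_filter.1 hk).2)
  -- the unclamped columns form an interval
  have hS0b : |∑ k ∈ S0, (1/2 - Int.fract (c - θ * k))| ≤ 6 * (H / q) + q := by
    rcases S0.eq_empty_or_nonempty with he | hne
    · rw [he]; simp; positivity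
    set a := S0.min' hne
    set b := S0.max' hne
    have ha := S0.min'_mem hne
    have hb := S0.max'_mem hne
    have hIco : S0 = Finset.Ico a (b+1) := by
      ext k
      rw [Finset.mem_Ico]
      constructor
      · intro hk
        exact ⟨S0.min'_le k hk, Nat.lt_succ_of_le (S0.le_max' k hk)⟩
      · rintro ⟨h1, h2⟩
        have h2 : k ≤ b := Nat.lt_succ_iff.1 h2
        have ha' := Finset.mem_filter.1 ha
        have hb' := Finset.mem_filter.1 hb
        rw [hS0, Finset.mem_filter]
        have hkH : k < H := lt_of_le_of_lt h2 (Finset.mem_range.1 hb'.1)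
        have h1r : (a:ℝ) ≤ k := by exact_mod_cast h1
        have h2r : (k:ℝ) ≤ b := by exact_mod_cast h2
        refine ⟨by simpa using hkH, ?_⟩
        have q1 := ha'.2
        have q2 := hb'.2
        simp only [hu] at q1 q2 ⊢
        change 1 ≤ c - θ * (a:ℝ) ∧ c - θ * (a:ℝ) ≤ H - 2 at q1
        change 1 ≤ c - θ * (b:ℝ) ∧ c - θ * (b:ℝ) ≤ H - 2 at q2
        rcases le_total 0 θ with h0 | h0 <;> constructor <;> nlinarith [q1.1, q1.2, q2.1, q2.2]
    have hbH : b < H := Finset.mem_range.1 (Finset.mem_filter.1 hb).1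
    rw [hIco, Finset.sum_Ico_eq_sum_range]
    have := fract_sum θ p q (by omega) hcop h (b + 1 - a) (c - θ * a)
    have h3 : ∀ k : ℕ, c - θ * ((a + k : ℕ) : ℝ) = c - θ * a - θ * k := by
      intro k; push_cast; ring
    simp only [h3]
    refine this.trans ?_
    have : ((b + 1 - a : ℕ) : ℝ) ≤ H := by exact_mod_cast (by omega : b + 1 - a ≤ H)
    gcongr
  have hsplit : ∑ k ∈ Finset.range H, colErr H c θ k =
      ∑ k ∈ S0, (1/2 - Int.fract (c - θ * k)) +
        ∑ k ∈ (Finset.range H).filter (fun k => ¬ (1 ≤ u k ∧ u k ≤ H - 2)), colErr H c θ k := by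
    rw [← Finset.sum_filter_add_sum_filter_not (Finset.range H) (fun k => 1 ≤ u k ∧ u k ≤ H - 2)]
    congr 1
    apply Finset.sum_congr rfl
    intro k hk
    have := (Finset.mem_filter.1 hk).2
    exact colErr_mid H c θ hθ k this.1 this.2
  have hrest : |∑ k ∈ (Finset.range H).filter (fun k => ¬ (1 ≤ u k ∧ u k ≤ H - 2)), colErr H c θ k|
      ≤ 2 * (S1 ∪ S2).card := by
    refine (Finset.abs_sum_le_sum_abs _ _).trans ?_
    have : ∑ k ∈ (Finset.range H).filter (fun k => ¬ (1 ≤ u k ∧ u k ≤ H - 2)), |colErr H c θ k|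
        ≤ ∑ k ∈ (S1 ∪ S2), |colErr H c θ k| := by
      rw [← Finset.sum_filter_ne_zero]
      refine Finset.sum_le_sum_of_subset_of_nonneg ?_ (fun _ _ _ => abs_nonneg _)
      intro k hk
      obtain ⟨hk, hne⟩ := Finset.mem_filter.1 hk
      obtain ⟨hk1, hk2⟩ := Finset.mem_filter.1 hk
      have hlo : ¬ (u k < -1) := fun hh => hne (by rw [colErr_low H c θ hθ k hh, abs_zero])
      have hhi : ¬ (H < u k) := fun hh => hne (by rw [colErr_high H c θ hθ k hh, abs_zero])
      push Not at hlo hhi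
      rw [Finset.mem_union, hS1, hS2, Finset.mem_filter, Finset.mem_filter]
      by_cases h1 : 1 ≤ u k
      · right
        refine ⟨hk1, ?_⟩
        have : ¬ (u k ≤ H - 2) := fun h2 => hk2 ⟨h1, h2⟩
        push Not at this
        rw [abs_le]; constructor <;> linarith
      · left
        push Not at h1
        refine ⟨hk1, ?_⟩
        rw [abs_le]; constructor <;> linarith
    refine this.trans ?_
    refine (Finset.sum_le_card_nsmul _ _ 2 fun k _ => colErr_triv H c θ hθ k).trans ?_
    simp; linarith
  have hcard : ((S1 ∪ S2).card : ℝ) ≤ 8 * q + 2 := by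
    have := (Finset.card_union_le S1 S2).trans (Nat.add_le_add hS1c hS2c)
    have h2 : ((S1 ∪ S2).card : ℝ) ≤ ((4 * q + 1 + (4 * q + 1) : ℕ) : ℝ) := by exact_mod_cast this
    push_cast at h2; linarith
  rw [hsplit]
  refine (abs_add_le _ _).trans ?_
  linarith

/-! ### Lattice points and area of a half-plane in a grid box -/

/-- The counting measure of the lattice `ℤ²`, as a measure on the plane. -/
def latMeas : Measure E2 := Measure.map ek Measure.count

/-- The box with index `m` of the half-open square grid of mesh `H`. The shift by `1/2` makes it a union
of unit cells centred at its lattice points, so a box contains as many lattice points as its area. -/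
def gridBox (H : ℕ) (m : Fin 2 → ℤ) : Set E2 :=
  {x | ∀ i, (H : ℝ) * m i - 1 / 2 ≤ x i ∧ x i < H * m i + H - 1 / 2}

/-- The closed half-plane `⟪ν, x⟫ ≤ c`. -/
def halfPl (ν : E2) (c : ℝ) : Set E2 := {x | ⟪ν, x⟫ ≤ c}

lemma inner_two (x y : E2) : ⟪x, y⟫ = x 0 * y 0 + x 1 * y 1 := by
  simp [PiLp.inner_apply, Fin.sum_univ_two, mul_comm]

lemma ek_apply (k : Fin 2 → ℤ) (i : Fin 2) : ek k i = k i := rfl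

lemma measurable_coord (i : Fin 2) : Measurable fun x : E2 => x i :=
  (by fun_prop : Continuous fun x : E2 => x i).measurable

lemma measurable_ek : Measurable ek := measurable_of_countable _

lemma measurableSet_gridBox (H : ℕ) (m : Fin 2 → ℤ) : MeasurableSet (gridBox H m) := by
  have : gridBox H m = ⋂ i, (fun x : E2 => x i) ⁻¹'
      (Ico ((H : ℝ) * m i - 1 / 2) (H * m i + H - 1 / 2)) := by
    ext x; simp [gridBox]
  rw [this]
  exact MeasurableSet.iInter fun i => measurable_coord i measurableSet_Ico

lemma measurableSet_halfPl (ν : E2) (c : ℝ) : MeasurableSet (halfPl ν c) :=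
  (isClosed_le (by fun_prop) continuous_const).measurableSet

lemma latMeas_apply {S : Set E2} (hS : MeasurableSet S) :
    latMeas S = ((ek ⁻¹' S).encard : ℝ≥0∞) := by
  rw [latMeas, Measure.map_apply measurable_ek hS,
    Measure.count_apply (Set.countable_univ.mono (subset_univ _)).measurableSet]

lemma latMeas_real {S : Set E2} (hS : MeasurableSet S) :
    latMeas.real S = latticeCount S := by
  rw [Measure.real, latMeas_apply hS, latticeCount]
  change _ = ((Nat.card (ek ⁻¹' S) : ℕ) : ℝ)
  rw [Nat.card_coe_set_eq, Set.ncard]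
  generalize (ek ⁻¹' S).encard = e
  induction e using ENat.recTopCoe <;> simp

/-- Counting the lattice points of a region in a box column by column. -/
lemma lattice_cols (H : ℕ) (a b : ℤ) (i j : Fin 2) (hij : i ≠ j) (P : ℤ → ℤ → Prop)
    [∀ x y, Decidable (P x y)] :
    Nat.card {k : Fin 2 → ℤ | (a ≤ k i ∧ k i < a + H) ∧ (b ≤ k j ∧ k j < b + H) ∧ P (k i) (k j)}
      = ∑ k ∈ Finset.range H, ((Finset.range H).filter (fun l : ℕ => P (a + k) (b + l))).card := by
  classical
  have hcases : ∀ idx : Fin 2, idx = i ∨ idx = j := by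
    intro idx; omega
  rw [← Finset.card_sigma, ← Nat.card_eq_finsetCard]
  symm
  refine Nat.card_congr ⟨fun z => ⟨fun idx => if idx = i then a + z.1.1 else b + z.1.2, ?_⟩,
    fun k => ⟨⟨(k.1 i - a).toNat, (k.1 j - b).toNat⟩, ?_⟩, ?_, ?_⟩
  · obtain ⟨⟨x, y⟩, hz⟩ := z
    simp only [Finset.mem_sigma, Finset.mem_range, Finset.mem_filter] at hz
    simp only [mem_ofPred_eq, if_true, if_neg hij.symm]
    exact ⟨by omega, by omega, hz.2.2⟩
  · obtain ⟨k, hk⟩ := k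
    simp only [mem_ofPred_eq] at hk
    simp only [Finset.mem_sigma, Finset.mem_range, Finset.mem_filter]
    refine ⟨by omega, by omega, ?_⟩
    rw [Int.toNat_of_nonneg (by omega), Int.toNat_of_nonneg (by omega)]
    simpa using hk.2.2
  · rintro ⟨⟨x, y⟩, hz⟩
    simp [hij.symm]
  · rintro ⟨k, hk⟩
    simp only [mem_ofPred_eq] at hk
    apply Subtype.ext
    funext idx
    rcases hcases idx with rfl | rfl
    · simp; omega
    · simp [hij.symm]; omega

lemma mp_coords (i j : Fin 2) (hij : i ≠ j) :
    MeasurePreserving (fun x : E2 => (x i, x j)) volume volume := by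
  have h1 : MeasurePreserving (fun x : E2 => (x 0, x 1)) volume volume :=
    (volume_preserving_finTwoArrow ℝ).comp (PiLp.volume_preserving_ofLp (Fin 2))
  have h2 : MeasurePreserving (fun x : E2 => (x 1, x 0)) volume volume :=
    (Measure.measurePreserving_swap (μ := (volume : Measure ℝ)) (ν := volume)).comp h1
  fin_cases i <;> fin_cases j
  · exact absurd rfl hij
  · exact h1
  · exact h2
  · exact absurd rfl hij

lemma slice_pos (H : ℕ) (b u : ℝ) :
    volume {y : ℝ | (b - 1 / 2 ≤ y ∧ y < b + H - 1 / 2) ∧ y ≤ b + u} =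
      ENNReal.ofReal (colLen H u) := by
  have h1 : {y : ℝ | (b - 1 / 2 ≤ y ∧ y < b + H - 1 / 2) ∧ y ≤ b + u} =
      Ico (b - 1/2) (b + H - 1/2) ∩ Iic (b + u) := rfl
  have h2 : (Ico (b - 1/2) (b + H - 1/2) ∩ Iic (b + u) : Set ℝ) =ᵐ[volume]
      (Ico (b - 1/2) (b + H - 1/2) ∩ Iio (b + u) : Set ℝ) :=
    (ae_eq_refl _).inter Iio_ae_eq_Iic.symm
  rw [h1, measure_congr h2, Ico_inter_Iio, Real.volume_Ico, colLen, ENNReal.ofReal_max]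
  simp only [ENNReal.ofReal_zero, zero_le, max_eq_right]
  congr 1
  rw [← min_sub_sub_right, min_comm]
  congr 1 <;> ring

lemma slice_neg (H : ℕ) (b u : ℝ) :
    volume {y : ℝ | (b - 1 / 2 ≤ y ∧ y < b + H - 1 / 2) ∧ b + (H - 1 - u) ≤ y} =
      ENNReal.ofReal (colLen H u) := by
  have h1 : {y : ℝ | (b - 1 / 2 ≤ y ∧ y < b + H - 1 / 2) ∧ b + (H - 1 - u) ≤ y} =
      Ico (b - 1/2) (b + H - 1/2) ∩ Ici (b + (H - 1 - u)) := rfl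
  rw [h1, Ico_inter_Ici, Real.volume_Ico, colLen, ENNReal.ofReal_max]
  simp only [ENNReal.ofReal_zero, zero_le, max_eq_right]
  congr 1
  rw [← min_sub_sub_left, min_comm]
  congr 1 <;> ring

/-- Fubini: the area of a region in a box, when the vertical slice at each `x` has the length of
the part of the box below the line of height `c - θ * (x - a)`. -/
lemma vol_cols (H : ℕ) (a b : ℝ) (i j : Fin 2) (hij : i ≠ j) (P : ℝ → ℝ → Prop)
    (hP : MeasurableSet {z : ℝ × ℝ | P z.1 z.2}) (c θ : ℝ)
    (hs : ∀ x, volume {y : ℝ | (b - 1 / 2 ≤ y ∧ y < b + H - 1 / 2) ∧ P x y} =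
      ENNReal.ofReal (colLen H (c - θ * (x - a)))) :
    volume.real {x : E2 | (a - 1 / 2 ≤ x i ∧ x i < a + H - 1 / 2) ∧
      (b - 1 / 2 ≤ x j ∧ x j < b + H - 1 / 2) ∧ P (x i) (x j)} =
      ∫ x in (-1/2 : ℝ)..(H - 1 / 2), colLen H (c - θ * x) := by
  set T : Set (ℝ × ℝ) := {z | (a - 1 / 2 ≤ z.1 ∧ z.1 < a + H - 1 / 2) ∧
      (b - 1 / 2 ≤ z.2 ∧ z.2 < b + H - 1 / 2) ∧ P z.1 z.2} with hT
  have hTm : MeasurableSet T := by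
    have : T = (Ico (a - 1/2) (a + H - 1/2) ×ˢ Ico (b - 1/2) (b + H - 1/2)) ∩
        {z : ℝ × ℝ | P z.1 z.2} := by
      ext z; simp only [hT, mem_ofPred_eq, mem_inter_iff, mem_prod, mem_Ico]; tauto
    rw [this]
    exact (measurableSet_Ico.prod measurableSet_Ico).inter hP
  have hvol : volume {x : E2 | (a - 1 / 2 ≤ x i ∧ x i < a + H - 1 / 2) ∧
      (b - 1 / 2 ≤ x j ∧ x j < b + H - 1 / 2) ∧ P (x i) (x j)} = volume T :=
    (mp_coords i j hij).measure_preimage hTm.nullMeasurableSet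
  have hslice : ∀ x, volume (Prod.mk x ⁻¹' T) =
      (Ico (a - 1/2) (a + H - 1/2)).indicator
        (fun x => ENNReal.ofReal (colLen H (c - θ * (x - a)))) x := by
    intro x
    by_cases hx : x ∈ Ico (a - 1/2) (a + H - 1/2)
    · rw [indicator_of_mem hx, ← hs x]
      congr 1
      ext y
      simp only [hT, mem_preimage, mem_ofPred_eq]
      constructor
      · exact fun h => h.2
      · exact fun h => ⟨hx, h⟩
    · rw [indicator_of_notMem hx]
      have : Prod.mk x ⁻¹' T = ∅ := by
        ext y
        simp only [hT, mem_preimage, mem_ofPred_eq, mem_empty_iff_false, iff_false]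
        exact fun h => hx h.1
      rw [this, measure_empty]
  have hcont : Continuous fun x => colLen H (c - θ * (x - a)) :=
    (colLen_cont H).comp (by fun_prop)
  have hle : a - 1/2 ≤ a + (H:ℝ) - 1/2 := by
    have : (0:ℝ) ≤ H := Nat.cast_nonneg H
    linarith
  rw [Measure.real, hvol, Measure.volume_eq_prod, Measure.prod_apply hTm]
  simp only [hslice]
  rw [lintegral_indicator measurableSet_Ico, ← ofReal_integral_eq_lintegral_ofReal,
    ENNReal.toReal_ofReal]
  · rw [integral_Ico_eq_integral_Ioc, ← intervalIntegral.integral_of_le hle,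
      intervalIntegral.integral_comp_sub_right (fun x => colLen H (c - θ * x)) a]
    congr 1 <;> ring
  · exact integral_nonneg fun x => le_max_left _ _
  · exact (hcont.integrableOn_Icc).mono_set Ico_subset_Icc_self
  · exact ae_of_all _ fun x => le_max_left _ _

/-- Lattice points and area of a half-plane in a box, in terms of the columns in the direction of the
`j`-th coordinate. The box is reflected when `ν j < 0`, which changes the sign of the slope. -/
lemma hp_box (H : ℕ) (m : Fin 2 → ℤ) (ν : E2) (i j : Fin 2) (hij : i ≠ j) (hν : ν j ≠ 0) :
    ∃ c0 θ : ℝ, (θ = ν i / ν j ∨ θ = - (ν i / ν j)) ∧ ∀ c,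
      latMeas.real (halfPl ν c ∩ gridBox H m) =
        ∑ k ∈ Finset.range H, (colCnt H ((c0 + c / |ν j|) - θ * k) : ℝ) ∧
      volume.real (halfPl ν c ∩ gridBox H m) =
        ∫ x in (-1/2 : ℝ)..(H - 1 / 2), colLen H ((c0 + c / |ν j|) - θ * x) := by
  classical
  have hcases : ∀ Q : Fin 2 → Prop, (∀ idx, Q idx) ↔ Q i ∧ Q j := by
    intro Q
    constructor
    · exact fun h => ⟨h i, h j⟩
    · rintro ⟨h1, h2⟩ idx
      have : idx = i ∨ idx = j := by omega
      rcases this with rfl | rfl <;> assumption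
  have hin : ∀ x : E2, ⟪ν, x⟫ = ν i * x i + ν j * x j := by
    intro x
    rw [inner_two]
    have : (i = 0 ∧ j = 1) ∨ (i = 1 ∧ j = 0) := by omega
    rcases this with ⟨rfl, rfl⟩ | ⟨rfl, rfl⟩
    · rfl
    · ring
  set a : ℤ := H * m i with ha
  set b : ℤ := H * m j with hb
  have haR : (a:ℝ) = H * m i := by rw [ha]; push_cast; ring
  have hbR : (b:ℝ) = H * m j := by rw [hb]; push_cast; ring
  have hset : ∀ c, halfPl ν c ∩ gridBox H m =
      {x : E2 | ((a:ℝ) - 1 / 2 ≤ x i ∧ x i < a + H - 1 / 2) ∧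
      ((b:ℝ) - 1 / 2 ≤ x j ∧ x j < b + H - 1 / 2) ∧ ν i * x i + ν j * x j ≤ c} := by
    intro c
    ext x
    simp only [halfPl, gridBox, mem_inter_iff, mem_ofPred_eq, hin, hcases, haR, hbR]
    tauto
  have hinteg : ∀ (z w : ℤ), ((w:ℝ) - 1/2 ≤ z ∧ (z:ℝ) < w + H - 1/2) ↔ (w ≤ z ∧ z < w + H) := by
    intro z w
    constructor
    · rintro ⟨h1, h2⟩
      constructor
      · have : (w:ℝ) < z + 1 := by linarith
        have : w < z + 1 := by exact_mod_cast this
        omega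
      · have : (z:ℝ) < w + H := by linarith
        exact_mod_cast this
    · rintro ⟨h1, h2⟩
      have h1 : (w:ℝ) ≤ z := by exact_mod_cast h1
      have h2 : (z:ℝ) + 1 ≤ w + H := by exact_mod_cast h2
      constructor <;> linarith
  have hcount : ∀ c, latMeas.real (halfPl ν c ∩ gridBox H m) =
      ∑ k ∈ Finset.range H, (((Finset.range H).filter
        (fun l : ℕ => ν i * (a + k : ℤ) + ν j * (b + l : ℤ) ≤ c)).card : ℝ) := by
    intro c
    rw [latMeas_real ((measurableSet_halfPl ν c).inter (measurableSet_gridBox H m)), latticeCount]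
    rw [← Nat.cast_sum, ← lattice_cols H a b i j hij
      (fun x y : ℤ => ν i * x + ν j * y ≤ c)]
    congr 1
    refine Nat.card_congr (Equiv.setCongr ?_)
    rw [hset]
    ext k
    simp only [mem_ofPred_eq, ek_apply, hinteg]
  have hmeas : ∀ c, MeasurableSet {z : ℝ × ℝ | ν i * z.1 + ν j * z.2 ≤ c} := fun c =>
    (isClosed_le (by fun_prop) continuous_const).measurableSet
  rcases lt_or_gt_of_ne hν with hneg | hpos
  · refine ⟨H - 1 + b - ν i * a / |ν j|, - (ν i / ν j), Or.inr rfl, fun c => ?_⟩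
    have habs : |ν j| = - ν j := abs_of_neg hneg
    have hd : ∀ x y : ℝ, ν i * x + ν j * y ≤ c ↔
        b + (H - 1 - ((H - 1 + b - ν i * a / |ν j| + c / |ν j|) - -(ν i / ν j) * (x - a))) ≤ y := by
      intro x y
      have e : b + (H - 1 - ((H - 1 + b - ν i * a / |ν j| + c / |ν j|) - -(ν i / ν j) * (x - a))) =
          (c - ν i * x) / ν j := by
        rw [habs]; field_simp; ring
      rw [e, div_le_iff_of_neg hneg]
      constructor <;> intro h <;> linarith
    constructor
    · rw [hcount]
      apply Finset.sum_congr rfl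
      intro k _
      congr 1
      unfold colCnt
      rw [Finset.card_filter, Finset.card_filter, ← Finset.sum_range_reflect]
      apply Finset.sum_congr rfl
      intro l hl
      have hl : l < H := by simpa using hl
      have hc : (((H - 1 - l : ℕ) : ℤ) : ℝ) = H - 1 - l := by
        have : ((H - 1 - l : ℕ) : ℤ) = H - 1 - l := by omega
        rw [this]; push_cast; ring
      congr 1
      rw [hd, eq_iff_iff]
      push_cast at hc ⊢
      rw [hc]
      constructor <;> intro h <;> linarith
    · rw [hset]
      refine vol_cols H a b i j hij (fun x y => ν i * x + ν j * y ≤ c) (hmeas c) _ _ ?_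
      intro x
      simp only [hd]
      exact slice_neg H b _
  · refine ⟨- b - ν i * a / |ν j|, ν i / ν j, Or.inl rfl, fun c => ?_⟩
    have habs : |ν j| = ν j := abs_of_pos hpos
    have hd : ∀ x y : ℝ, ν i * x + ν j * y ≤ c ↔
        y ≤ b + ((- b - ν i * a / |ν j| + c / |ν j|) - (ν i / ν j) * (x - a)) := by
      intro x y
      have e : b + ((- b - ν i * a / |ν j| + c / |ν j|) - (ν i / ν j) * (x - a)) =
          (c - ν i * x) / ν j := by
        rw [habs]; field_simp; ring
      rw [e, le_div_iff₀ hpos]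
      constructor <;> intro h <;> linarith
    constructor
    · rw [hcount]
      apply Finset.sum_congr rfl
      intro k _
      congr 1
      unfold colCnt
      congr 1
      ext l
      rw [Finset.mem_filter, Finset.mem_filter]
      refine and_congr_right fun _ => ?_
      rw [hd]
      push_cast
      constructor <;> intro h <;> linarith
    · rw [hset]
      refine vol_cols H a b i j hij (fun x y => ν i * x + ν j * y ≤ c) (hmeas c) _ _ ?_
      intro x
      simp only [hd]
      exact slice_pos H b _

/-! ### Comparison of a set with a half-plane in a grid box -/

lemma abs_coord_le (x : E2) (i : Fin 2) : |x i| ≤ ‖x‖ := by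
  have := PiLp.norm_apply_le x i
  simpa using this

lemma norm_le_coords (x : E2) : ‖x‖ ≤ |x 0| + |x 1| := by
  rw [EuclideanSpace.norm_eq, Fin.sum_univ_two, Real.norm_eq_abs, Real.norm_eq_abs]
  apply Real.sqrt_le_iff.2
  constructor
  · positivity
  · nlinarith [abs_nonneg (x 0), abs_nonneg (x 1)]

lemma latMeas_lt_top {S : Set E2} (hS : Bornology.IsBounded S) : latMeas S < ⊤ := by
  obtain ⟨R, hR⟩ := hS.subset_closedBall 0
  refine (measure_mono hR).trans_lt ?_
  rw [latMeas_apply Metric.isClosed_closedBall.measurableSet]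
  have hfin : (ek ⁻¹' Metric.closedBall 0 R).Finite := by
    refine (Set.finite_Icc (fun _ => -⌈R⌉ : Fin 2 → ℤ) (fun _ => ⌈R⌉)).subset ?_
    intro k hk
    have hk : ‖ek k‖ ≤ R := by simpa using hk
    have h1 : ∀ i, |(k i : ℝ)| ≤ R := fun i => (abs_coord_le (ek k) i).trans hk
    rw [mem_Icc, Pi.le_def, Pi.le_def]
    constructor <;> intro i <;> have h2 := abs_le.1 (h1 i) <;> have h3 := Int.le_ceil R
    · have : (-⌈R⌉ : ℝ) ≤ k i := by linarith [h2.1]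
      exact_mod_cast this
    · have : (k i : ℝ) ≤ ⌈R⌉ := by linarith [h2.2]
      exact_mod_cast this
  rw [hfin.encard_eq_coe_toFinset_card]
  simp

lemma gridBox_close {H : ℕ} {m : Fin 2 → ℤ} {x y : E2} (hx : x ∈ gridBox H m)
    (hy : y ∈ gridBox H m) : ‖x - y‖ ≤ 2 * H := by
  refine (norm_le_coords _).trans ?_
  have h : ∀ i, |(x - y) i| ≤ H := by
    intro i
    have h1 := hx i
    have h2 := hy i
    rw [PiLp.sub_apply, abs_le]
    constructor <;> linarith [h1.1, h1.2, h2.1, h2.2]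
  linarith [h 0, h 1]

lemma gridBox_bounded (H : ℕ) (m : Fin 2 → ℤ) : Bornology.IsBounded (gridBox H m) := by
  rw [Metric.isBounded_iff]
  exact ⟨2 * H, fun x hx y hy => by rw [dist_eq_norm]; exact gridBox_close hx hy⟩

lemma gridBox_convex (H : ℕ) (m : Fin 2 → ℤ) : Convex ℝ (gridBox H m) := by
  intro x hx y hy a b ha hb hab i
  have h := (convex_Ico ((H : ℝ) * m i - 1 / 2) (H * m i + H - 1 / 2)) (hx i) (hy i) ha hb hab
  simpa using h

lemma mem_gridBox_iff {H : ℕ} (hH : 0 < H) (m : Fin 2 → ℤ) (x : E2) :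
    x ∈ gridBox H m ↔ ∀ i, m i = ⌊(x i + 1 / 2) / H⌋ := by
  have hH0 : (0:ℝ) < H := by exact_mod_cast hH
  refine forall_congr' fun i => ?_
  rw [eq_comm, Int.floor_eq_iff, le_div_iff₀ hH0, div_lt_iff₀ hH0]
  constructor <;> rintro ⟨h1, h2⟩ <;> constructor <;> nlinarith

lemma gridBox_disjoint {H : ℕ} (hH : 0 < H) {m m' : Fin 2 → ℤ} (h : m ≠ m') :
    Disjoint (gridBox H m) (gridBox H m') := by
  rw [Set.disjoint_left]
  intro x hx hx'
  rw [mem_gridBox_iff hH] at hx hx'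
  exact h (funext fun i => (hx i).trans (hx' i).symm)

lemma gridBox_full (H : ℕ) (m : Fin 2 → ℤ) :
    latMeas.real (gridBox H m) = volume.real (gridBox H m) := by
  classical
  have hset : gridBox H m = {x : E2 | (((H * m 0 : ℤ) : ℝ) - 1 / 2 ≤ x 0 ∧ x 0 < ((H * m 0 : ℤ) : ℝ) + H - 1 / 2) ∧
      (((H * m 1 : ℤ) : ℝ) - 1 / 2 ≤ x 1 ∧ x 1 < ((H * m 1 : ℤ) : ℝ) + H - 1 / 2) ∧ True} := by
    ext x
    simp [gridBox, Fin.forall_fin_two]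
  have hv := vol_cols H ((H * m 0 : ℤ) : ℝ) ((H * m 1 : ℤ) : ℝ) 0 1 (by simp) (fun _ _ => True)
    (by simp) H 0 (by
      intro x
      rw [← slice_pos H ((H * m 1 : ℤ) : ℝ)]
      congr 1
      ext y
      simp only [mem_ofPred_eq]
      constructor
      · rintro ⟨h1, h2⟩; exact ⟨h1, by linarith [h1.2]⟩
      · rintro ⟨h1, h2⟩; exact ⟨h1, trivial⟩)
  rw [← hset] at hv
  rw [hv, latMeas_real (measurableSet_gridBox H m), latticeCount]
  have hl := lattice_cols H (H * m 0) (H * m 1) 0 1 (by simp) (fun _ _ => True)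
  have he : {k : Fin 2 → ℤ | ek k ∈ gridBox H m} = {k : Fin 2 → ℤ |
      ((H * m 0) ≤ k 0 ∧ k 0 < (H * m 0) + H) ∧ ((H * m 1) ≤ k 1 ∧ k 1 < (H * m 1) + H) ∧ True} := by
    have hinteg : ∀ (z w : ℤ), ((w:ℝ) - 1/2 ≤ z ∧ (z:ℝ) < w + H - 1/2) ↔ (w ≤ z ∧ z < w + H) := by
      intro z w
      constructor
      · rintro ⟨h1, h2⟩
        constructor
        · have : (w:ℝ) < z + 1 := by linarith
          have : w < z + 1 := by exact_mod_cast this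
          omega
        · have : (z:ℝ) < w + H := by linarith
          exact_mod_cast this
      · rintro ⟨h1, h2⟩
        have h1 : (w:ℝ) ≤ z := by exact_mod_cast h1
        have h2 : (z:ℝ) + 1 ≤ w + H := by exact_mod_cast h2
        constructor <;> linarith
    rw [hset]
    ext k
    simp only [mem_ofPred_eq, ek_apply, hinteg]
  have hcl : colLen H H = H := by
    unfold colLen
    rw [min_eq_right (by linarith), max_eq_right (Nat.cast_nonneg H)]
  rw [Nat.card_congr (Equiv.setCongr he), hl]
  simp [hcl]
  left; ring

lemma tile_sum (μ : Measure E2) {H : ℕ} (hH : 0 < H) {K : Set E2} (hK : MeasurableSet K)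
    (hfin : μ K < ⊤) (F : Finset (Fin 2 → ℤ)) (hF : ∀ x ∈ K, ∃ m ∈ F, x ∈ gridBox H m) :
    μ.real K = ∑ m ∈ F, μ.real (K ∩ gridBox H m) := by
  have h1 : K = ⋃ m ∈ F, (K ∩ gridBox H m) := by
    ext x
    simp only [mem_iUnion, mem_inter_iff, exists_prop]
    constructor
    · intro hx
      obtain ⟨m, hm, hxm⟩ := hF x hx
      exact ⟨m, hm, hx, hxm⟩
    · rintro ⟨m, _, hx, _⟩; exact hx
  conv_lhs => rw [h1]
  apply measureReal_biUnion_finset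
  · intro m _ m' _ hmm
    exact (gridBox_disjoint hH hmm).mono inter_subset_right inter_subset_right
  · intro m _
    exact hK.inter (measurableSet_gridBox H m)
  · intro m _
    exact ((measure_mono inter_subset_left).trans_lt hfin).ne

/-- If in the box `K` lies between two parallel half-planes at levels `t - ε` and `t`, then its
discrepancy is at most the column error of a half-plane plus the area of the strip. -/
lemma box_sandwich (H : ℕ) (m : Fin 2 → ℤ) (ν : E2) (i j : Fin 2) (hij : i ≠ j) (hν : ν j ≠ 0)
    (K : Set E2) (t ε B : ℝ) (hε : 0 ≤ ε)
    (hup : K ∩ gridBox H m ⊆ halfPl ν t) (hlo : halfPl ν (t - ε) ∩ gridBox H m ⊆ K)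
    (hB : ∀ c θ : ℝ, (θ = ν i / ν j ∨ θ = - (ν i / ν j)) →
      |∑ k ∈ Finset.range H, colErr H c θ k| ≤ B) :
    |latMeas.real (K ∩ gridBox H m) - volume.real (K ∩ gridBox H m)| ≤ B + H * (ε / |ν j|) := by
  obtain ⟨c0, θ, hθ, hc⟩ := hp_box H m ν i j hij hν
  have hd : ∀ c, |latMeas.real (halfPl ν c ∩ gridBox H m)
      - volume.real (halfPl ν c ∩ gridBox H m)| ≤ B := by
    intro c
    rw [(hc c).1, (hc c).2, ← sum_colErr]
    exact hB _ _ hθ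
  have hpos : 0 < |ν j| := abs_pos.2 hν
  have hgap : volume.real (halfPl ν t ∩ gridBox H m) -
      volume.real (halfPl ν (t - ε) ∩ gridBox H m) ≤ H * (ε / |ν j|) := by
    rw [(hc t).2, (hc (t - ε)).2, ← intervalIntegral.integral_sub (colLen_intble _ _ _ _ _)
      (colLen_intble _ _ _ _ _)]
    refine (le_abs_self _).trans ?_
    have := intervalIntegral.norm_integral_le_of_norm_le_const (a := (-1/2 : ℝ)) (b := H - 1/2)
      (C := ε / |ν j|)
      (f := fun x => colLen H ((c0 + t / |ν j|) - θ * x) - colLen H ((c0 + (t - ε) / |ν j|) - θ * x))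
      (by
        intro x _
        rw [Real.norm_eq_abs]
        refine (colLen_lip _ _ _).trans (le_of_eq ?_)
        rw [show c0 + t / |ν j| - θ * x - (c0 + (t - ε) / |ν j| - θ * x) = ε / |ν j| by ring]
        exact abs_of_nonneg (by positivity))
    rw [Real.norm_eq_abs] at this
    refine this.trans (le_of_eq ?_)
    rw [show (H:ℝ) - 1/2 - -1/2 = H by ring, Nat.abs_cast, mul_comm]
  have hbl : ∀ S : Set E2, latMeas (S ∩ gridBox H m) ≠ ⊤ := fun S =>
    ((measure_mono inter_subset_right).trans_lt (latMeas_lt_top (gridBox_bounded H m))).ne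
  have hbv : ∀ S : Set E2, volume (S ∩ gridBox H m) ≠ ⊤ := fun S =>
    ((measure_mono inter_subset_right).trans_lt (gridBox_bounded H m).measure_lt_top).ne
  have hs1 : K ∩ gridBox H m ⊆ halfPl ν t ∩ gridBox H m := fun x hx => ⟨hup hx, hx.2⟩
  have hs2 : halfPl ν (t - ε) ∩ gridBox H m ⊆ K ∩ gridBox H m := fun x hx => ⟨hlo hx, hx.2⟩
  have a1 := measureReal_mono (μ := latMeas) hs1 (hbl _)
  have a2 := measureReal_mono (μ := latMeas) hs2 (hbl _)
  have a3 := measureReal_mono (μ := volume) hs1 (hbv _)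
  have a4 := measureReal_mono (μ := volume) hs2 (hbv _)
  have d1 := abs_le.1 (hd t)
  have d2 := abs_le.1 (hd (t - ε))
  rw [abs_le]
  constructor <;> linarith [d1.1, d1.2, d2.1, d2.2]

/-- A box contained in the sublevel set, or disjoint from it, has zero discrepancy; by connectedness
every other box contains a point of the level set. -/
lemma box_boundary (H : ℕ) (m : Fin 2 → ℤ) (ρ : E2 → ℝ) (hρ : Continuous ρ) (t : ℝ)
    (h : latMeas.real ({x | ρ x ≤ t} ∩ gridBox H m) -
      volume.real ({x | ρ x ≤ t} ∩ gridBox H m) ≠ 0) : ∃ x ∈ gridBox H m, ρ x = t := by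
  have h1 : ∃ x ∈ gridBox H m, ρ x ≤ t := by
    by_contra! hne
    apply h
    have : {x | ρ x ≤ t} ∩ gridBox H m = ∅ := by
      ext x
      simp only [mem_inter_iff, mem_ofPred_eq, mem_empty_iff_false, iff_false, not_and]
      intro hx hxb
      exact absurd hx (not_le.2 (hne x hxb))
    rw [this]; simp
  have h2 : ∃ x ∈ gridBox H m, t ≤ ρ x := by
    by_contra! hne
    apply h
    have : {x | ρ x ≤ t} ∩ gridBox H m = gridBox H m := by
      apply inter_eq_right.2
      intro x hx
      exact (hne x hx).le
    rw [this, gridBox_full, sub_self]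
  obtain ⟨x, hx, hxt⟩ := h1
  obtain ⟨y, hy, hyt⟩ := h2
  exact (gridBox_convex H m).isPreconnected.intermediate_value hx hy hρ.continuousOn ⟨hxt, hyt⟩

/-! ### Support function and outer normal -/

/-- The rotation of the plane by a quarter turn. -/
def rot (v : E2) : E2 := !₂[-(v 1), v 0]

@[simp] lemma rot_zero_coord (v : E2) : rot v 0 = -(v 1) := rfl
@[simp] lemma rot_one_coord (v : E2) : rot v 1 = v 0 := rfl

lemma inner_rot (v w : E2) : ⟪v, rot w⟫ = -⟪rot v, w⟫ := by
  simp only [inner_two, rot_zero_coord, rot_one_coord]; ring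

lemma norm_sq_two (v : E2) : ‖v‖ ^ 2 = v 0 ^ 2 + v 1 ^ 2 := by
  rw [EuclideanSpace.norm_sq_eq]; simp

lemma norm_rot (v : E2) : ‖rot v‖ = ‖v‖ := by
  rw [← sq_eq_sq₀ (norm_nonneg _) (norm_nonneg _), norm_sq_two, norm_sq_two]
  simp only [rot_zero_coord, rot_one_coord]; ring

lemma rot_sub (v w : E2) : rot v - rot w = rot (v - w) := by
  ext i; fin_cases i
  · simp [rot]; ring
  · simp [rot]

lemma rot_cont : Continuous rot := by
  have : LipschitzWith 1 rot := LipschitzWith.of_dist_le_mul fun x y => by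
    rw [dist_eq_norm, dist_eq_norm, rot_sub, norm_rot]; simp
  exact this.continuous

/-- Expansion of `v` in the orthonormal basis `T`, `rot T`. -/
lemma onb_expand (T v : E2) (hT : ‖T‖ = 1) : v = ⟪v, T⟫ • T + ⟪v, rot T⟫ • rot T := by
  have h : T 0 ^ 2 + T 1 ^ 2 = 1 := by rw [← norm_sq_two, hT]; norm_num
  ext i; fin_cases i
  · simp [inner_two]
    linear_combination (-(v 0)) * h
  · simp [inner_two]
    linear_combination (-(v 1)) * h

section supp
variable {Ω : Set E2} {r R : ℝ}

lemma supp_bdd (hR : ∀ y ∈ closure Ω, ‖y‖ ≤ R) (ξ : E2) :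
    BddAbove ((fun x => ⟪x, ξ⟫) '' Ω) := by
  refine ⟨R * ‖ξ‖, ?_⟩
  rintro _ ⟨x, hx, rfl⟩
  refine (real_inner_le_norm x ξ).trans ?_
  gcongr
  exact hR x (subset_closure hx)

lemma inner_le_supp (hR : ∀ y ∈ closure Ω, ‖y‖ ≤ R) (ξ : E2) {y : E2} (hy : y ∈ closure Ω) :
    ⟪y, ξ⟫ ≤ suppFn Ω ξ := by
  have hcl : IsClosed {y : E2 | ⟪y, ξ⟫ ≤ suppFn Ω ξ} := isClosed_le (by fun_prop) continuous_const
  exact hcl.closure_subset_iff.2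
    (fun x hx => le_csSup (supp_bdd hR ξ) (mem_image_of_mem _ hx)) hy

lemma supp_le (hne : Ω.Nonempty) (ξ : E2) {B : ℝ} (h : ∀ y ∈ Ω, ⟪y, ξ⟫ ≤ B) :
    suppFn Ω ξ ≤ B := by
  apply csSup_le (hne.image _)
  rintro _ ⟨x, hx, rfl⟩
  exact h x hx

lemma supp_le_norm (h0 : (0 : E2) ∈ Ω) (hR : ∀ y ∈ closure Ω, ‖y‖ ≤ R) (ξ : E2) :
    suppFn Ω ξ ≤ R * ‖ξ‖ := by
  apply supp_le ⟨0, h0⟩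
  intro y hy
  refine (real_inner_le_norm y ξ).trans ?_
  gcongr
  exact hR y (subset_closure hy)

lemma norm_le_supp (hr : 0 < r) (hball : Metric.closedBall 0 r ⊆ Ω)
    (hR : ∀ y ∈ closure Ω, ‖y‖ ≤ R) (ξ : E2) :
    r * ‖ξ‖ ≤ suppFn Ω ξ := by
  by_cases hξ : ξ = 0
  · have := inner_le_supp hR ξ (subset_closure (hball (by simp [hr.le] : (0:E2) ∈ _)))
    rw [hξ] at this ⊢
    simpa using this
  have hn : 0 < ‖ξ‖ := norm_pos_iff.2 hξ
  have hm : (r / ‖ξ‖) • ξ ∈ Metric.closedBall (0:E2) r := by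
    rw [mem_closedBall_zero_iff, norm_smul, Real.norm_eq_abs, abs_of_pos (by positivity)]
    field_simp; exact le_refl _
  have := inner_le_supp hR ξ (subset_closure (hball hm))
  rw [real_inner_smul_left, real_inner_self_eq_norm_sq] at this
  calc r * ‖ξ‖ = r / ‖ξ‖ * ‖ξ‖ ^ 2 := by field_simp
    _ ≤ _ := this

lemma supp_lip (h0 : (0 : E2) ∈ Ω) (hR : ∀ y ∈ closure Ω, ‖y‖ ≤ R) (ξ ζ : E2) :
    suppFn Ω ξ ≤ suppFn Ω ζ + R * ‖ξ - ζ‖ := by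
  apply supp_le ⟨0, h0⟩
  intro y hy
  have h1 := inner_le_supp hR ζ (subset_closure hy)
  have h2 : ⟪y, ξ - ζ⟫ ≤ R * ‖ξ - ζ‖ := by
    refine (real_inner_le_norm y _).trans ?_
    gcongr
    exact hR y (subset_closure hy)
  rw [inner_sub_right] at h2
  linarith

lemma supp_cont (h0 : (0 : E2) ∈ Ω) (hR : ∀ y ∈ closure Ω, ‖y‖ ≤ R) : Continuous (suppFn Ω) := by
  have hR0 : 0 ≤ R := (norm_nonneg _).trans (hR 0 (subset_closure h0))
  have : LipschitzWith ⟨R, hR0⟩ (suppFn Ω) := LipschitzWith.of_dist_le_mul fun x y => by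
    rw [Real.dist_eq, dist_eq_norm, abs_le]
    have h1 := supp_lip h0 hR x y
    have h2 := supp_lip h0 hR y x
    rw [norm_sub_rev] at h2
    change -(R * ‖x - y‖) ≤ _ ∧ _ ≤ R * ‖x - y‖
    constructor <;> linarith
  exact this.continuous

lemma supp_smul (h0 : (0 : E2) ∈ Ω) (hR : ∀ y ∈ closure Ω, ‖y‖ ≤ R) {t : ℝ} (ht : 0 < t) (ξ : E2) :
    suppFn Ω (t • ξ) = t * suppFn Ω ξ := by
  have key : ∀ {t : ℝ}, 0 < t → ∀ ξ, suppFn Ω (t • ξ) ≤ t * suppFn Ω ξ := by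
    intro t ht ξ
    apply supp_le ⟨0, h0⟩
    intro y hy
    rw [real_inner_smul_right]
    have := inner_le_supp hR ξ (subset_closure hy)
    gcongr
  apply le_antisymm (key ht ξ)
  have := key (inv_pos.2 ht) (t • ξ)
  rw [smul_smul, inv_mul_cancel₀ ht.ne', one_smul] at this
  calc t * suppFn Ω ξ ≤ t * (t⁻¹ * suppFn Ω (t • ξ)) := by gcongr
    _ = _ := by field_simp

lemma smul_polar (h0 : (0 : E2) ∈ Ω) (hR : ∀ y ∈ closure Ω, ‖y‖ ≤ R) {t : ℝ} (ht : 0 < t) :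
    t • polarSet Ω = {x | suppFn Ω x ≤ t} := by
  ext x
  rw [mem_smul_set_iff_inv_smul_mem₀ ht.ne']
  change suppFn Ω (t⁻¹ • x) ≤ 1 ↔ suppFn Ω x ≤ t
  rw [supp_smul h0 hR (inv_pos.2 ht), inv_mul_le_iff₀ ht, mul_one]

end supp

lemma exists_radii {Ω : Set E2} (hopen : IsOpen Ω) (hbdd : Bornology.IsBounded Ω)
    (h0 : (0 : E2) ∈ Ω) : ∃ r R : ℝ, 0 < r ∧ 0 < R ∧ Metric.closedBall 0 r ⊆ Ω ∧
      ∀ y ∈ closure Ω, ‖y‖ ≤ R := by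
  obtain ⟨ε, hε, hb⟩ := Metric.isOpen_iff.1 hopen 0 h0
  obtain ⟨R, hR⟩ := hbdd.closure.subset_closedBall 0
  refine ⟨ε / 2, max R 1, by positivity, by positivity,
    (Metric.closedBall_subset_ball (by linarith)).trans hb, fun y hy => ?_⟩
  have := hR hy
  rw [mem_closedBall_zero_iff] at this
  exact this.trans (le_max_left _ _)

/-- One sign `σ` makes `σ • rot (γ' s)` the outer unit normal at every boundary point. A supporting
line at `γ s` exists by the Hahn-Banach theorem and is tangent since `γ` is differentiable, so some
sign works at each `s`. It does not depend on `s`, because `⟪γ s, rot (γ' s)⟫` is continuous in `s`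
and at least `r` in absolute value. -/
lemma exists_normal {Ω : Set E2} (hconv : Convex ℝ Ω) (hopen : IsOpen Ω) {r : ℝ}
    (hr : 0 < r) (hball : Metric.closedBall 0 r ⊆ Ω)
    {γ γ' γ'' : ℝ → E2} {L : ℝ} (hbp : BoundaryParam Ω γ γ' γ'' L) :
    ∃ σ : ℝ, (σ = 1 ∨ σ = -1) ∧ (∀ s, r ≤ ⟪γ s, σ • rot (γ' s)⟫) ∧
      ∀ s, ∀ y ∈ closure Ω, ⟪y, σ • rot (γ' s)⟫ ≤ ⟪γ s, σ • rot (γ' s)⟫ := by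
  obtain ⟨hL, hder, hcont, hunit, hper, himg, hinj, hii, hinteg⟩ := hbp
  have hfr : ∀ s, γ s ∈ frontier Ω := by
    intro s
    obtain ⟨y, hy, hyy⟩ := hper.exists_mem_Ico₀ hL s
    rw [hyy, ← himg]; exact mem_image_of_mem _ hy
  -- a supporting line at the boundary point, by separation from the open set `Ω`
  have hsup : ∀ s, ∃ w : E2, (w = rot (γ' s) ∨ w = -rot (γ' s)) ∧ r ≤ ⟪γ s, w⟫ ∧
      ∀ y ∈ closure Ω, ⟪y, w⟫ ≤ ⟪γ s, w⟫ := by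
    intro s
    have hnot : γ s ∉ Ω := by
      have := hfr s
      rw [hopen.frontier_eq] at this
      exact this.2
    obtain ⟨f, hf⟩ := geometric_hahn_banach_open_point hconv hopen hnot
    set w0 : E2 := (InnerProductSpace.toDual ℝ E2).symm f with hw0
    have hfw : ∀ y, f y = ⟪y, w0⟫ := by
      intro y
      rw [real_inner_comm, hw0, InnerProductSpace.toDual_symm_apply]
    have hcl : ∀ y ∈ closure Ω, ⟪y, w0⟫ ≤ ⟪γ s, w0⟫ := by
      have hc : IsClosed {y : E2 | ⟪y, w0⟫ ≤ ⟪γ s, w0⟫} :=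
        isClosed_le (by fun_prop) continuous_const
      refine fun y hy => hc.closure_subset_iff.2 (fun x hx => ?_) hy
      have := hf x hx
      rw [hfw, hfw] at this
      exact this.le
    have hw0ne : w0 ≠ 0 := by
      intro h
      have := hf 0 (hball (by simp [hr.le]))
      rw [hfw, hfw, h] at this
      simp at this
    have hn : 0 < ‖w0‖ := norm_pos_iff.2 hw0ne
    set w : E2 := ‖w0‖⁻¹ • w0 with hw
    have hw1 : ‖w‖ = 1 := by
      rw [hw, norm_smul, norm_inv, norm_norm, inv_mul_cancel₀ hn.ne']
    have hclw : ∀ y ∈ closure Ω, ⟪y, w⟫ ≤ ⟪γ s, w⟫ := by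
      intro y hy
      rw [hw, real_inner_smul_right, real_inner_smul_right]
      have := hcl y hy
      gcongr
    have hrw : r ≤ ⟪γ s, w⟫ := by
      have : r • w ∈ Metric.closedBall (0:E2) r := by
        rw [mem_closedBall_zero_iff, norm_smul, hw1, Real.norm_eq_abs, abs_of_pos hr, mul_one]
      have := hclw _ (subset_closure (hball this))
      rw [real_inner_smul_left, real_inner_self_eq_norm_sq, hw1] at this
      linarith
    have horth : ⟪γ' s, w⟫ = 0 := by
      have hd : HasDerivAt (fun u => ⟪γ u, w⟫) ⟪γ' s, w⟫ s := by
        have := (hder s).inner ℝ (hasDerivAt_const s w)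
        simpa using this
      have hmax : IsLocalMax (fun u => ⟪γ u, w⟫) s :=
        Filter.Eventually.of_forall fun u => hclw _ (frontier_subset_closure (hfr u))
      exact hmax.hasDerivAt_eq_zero hd
    have hexp := onb_expand (γ' s) w (hunit s)
    rw [real_inner_comm, horth, zero_smul, zero_add] at hexp
    refine ⟨w, ?_, hrw, hclw⟩
    have habs : |⟪w, rot (γ' s)⟫| = 1 := by
      have := congrArg norm hexp
      rw [hw1, norm_smul, norm_rot, hunit, Real.norm_eq_abs, mul_one] at this
      exact this.symm
    rcases eq_or_eq_neg_of_abs_eq habs with h | h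
    · left; rw [h, one_smul] at hexp; exact hexp
    · right; rw [h, neg_one_smul] at hexp; exact hexp
  set h : ℝ → ℝ := fun s => ⟪γ s, rot (γ' s)⟫ with hh
  have hγc : Continuous γ := continuous_iff_continuousAt.2 fun s => (hder s).continuousAt
  have hhc : Continuous h := hγc.inner (rot_cont.comp hcont)
  have habs : ∀ s, r ≤ h s ∨ h s ≤ -r := by
    intro s
    obtain ⟨w, hw | hw, h1, _⟩ := hsup s
    · left; rw [hw] at h1; exact h1
    · right; rw [hw, inner_neg_right] at h1; simp only [hh]; linarith
  have hconst : (∀ s, r ≤ h s) ∨ (∀ s, h s ≤ -r) := by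
    by_contra! hcon
    obtain ⟨⟨s1, h1⟩, ⟨s2, h2⟩⟩ := hcon
    have h1' : h s1 ≤ -r := (habs s1).resolve_left (not_le.2 h1)
    have h2' : r ≤ h s2 := (habs s2).resolve_right (not_le.2 h2)
    obtain ⟨s, hs⟩ := mem_range_of_exists_le_of_exists_ge hhc
      ⟨s1, (by linarith : h s1 ≤ 0)⟩ ⟨s2, (by linarith : 0 ≤ h s2)⟩
    rcases habs s with h3 | h3 <;> linarith
  rcases hconst with hp | hn
  · refine ⟨1, Or.inl rfl, fun s => by rw [one_smul]; exact hp s, fun s y hy => ?_⟩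
    obtain ⟨w, hw | hw, h1, h2⟩ := hsup s
    · rw [one_smul, ← hw]; exact h2 y hy
    · rw [hw, inner_neg_right] at h1
      have := hp s
      simp only [hh] at this
      linarith
  · refine ⟨-1, Or.inr rfl, fun s => ?_, fun s y hy => ?_⟩
    · rw [neg_one_smul, inner_neg_right]
      have := hn s
      simp only [hh] at this
      linarith
    obtain ⟨w, hw | hw, h1, h2⟩ := hsup s
    · rw [hw] at h1
      have := hn s
      simp only [hh] at this
      linarith
    · rw [neg_one_smul, ← hw]; exact h2 y hy

/-! ### The convex body and its boundary -/

/-- A convex body with its boundary parametrization `γ`, unit tangent `γ'`, curvature vector `γ''`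
and outer unit normal `n`; `r` and `R` are an inner and an outer radius about the origin, and `a`
is a lower bound for the curvature. All fields are consequences of the hypotheses of the theorem
(see `exists_body`). -/
structure Body (Ω : Set E2) (γ γ' γ'' n : ℝ → E2) (L a r R : ℝ) : Prop where
  Lpos : 0 < L
  apos : 0 < a
  rpos : 0 < r
  Rpos : 0 < R
  conv : Convex ℝ Ω
  zero_mem : (0 : E2) ∈ Ω
  ball : Metric.closedBall 0 r ⊆ Ω
  le_R : ∀ y ∈ closure Ω, ‖y‖ ≤ R
  der : ∀ t, HasDerivAt γ (γ' t) t
  cont' : Continuous γ'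
  unit : ∀ t, ‖γ' t‖ = 1
  per : Function.Periodic γ L
  img : γ '' Ico 0 L = frontier Ω
  fr : ∀ s, γ s ∈ frontier Ω
  ii : ∀ s t : ℝ, IntervalIntegrable γ'' volume s t
  sub_eq : ∀ s t : ℝ, γ' t - γ' s = ∫ v in s..t, γ'' v
  n_unit : ∀ s, ‖n s‖ = 1
  n_cont : Continuous n
  n_perp : ∀ s, ⟪γ' s, n s⟫ = 0
  n_sub : ∀ s t, ‖n s - n t‖ = ‖γ' s - γ' t‖
  expand : ∀ s v, v = ⟪v, γ' s⟫ • γ' s + ⟪v, n s⟫ • n s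
  supp_r : ∀ s, r ≤ ⟪γ s, n s⟫
  supp : ∀ s, ∀ y ∈ closure Ω, ⟪y, n s⟫ ≤ ⟪γ s, n s⟫
  n_rot : ∃ σ : ℝ, (σ = 1 ∨ σ = -1) ∧ ∀ s, n s = σ • rot (γ' s)
  curv : ∀ᵐ v, ∃ k : ℝ, a ≤ k ∧ γ'' v = -(k • n v)

lemma rot_hasDerivAt {f : ℝ → E2} {f' : E2} {s : ℝ} (h : HasDerivAt f f' s) (σ : ℝ) :
    HasDerivAt (fun u => σ • rot (f u)) (σ • rot f') s := by
  suffices HasDerivAt (fun u => rot (f u)) (rot f') s from this.const_smul σ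
  rw [hasDerivAt_iff_tendsto_slope] at h ⊢
  have : slope (fun u => rot (f u)) s = fun u => rot (slope f s u) := by
    funext u
    ext i; fin_cases i
    · simp [slope, rot]; ring
    · simp [slope, rot]
  rw [this]
  exact (rot_cont.tendsto _).comp h

/-- The geometric data derived from the hypotheses. Since the tangent has constant length, the curvature
vector is a multiple of the normal, and convexity determines its sign. -/
lemma exists_body {Ω : Set E2} (hconv : Convex ℝ Ω) (hopen : IsOpen Ω)
    (hbdd : Bornology.IsBounded Ω) (h0 : (0 : E2) ∈ Ω)
    {γ γ' γ'' : ℝ → E2} {L : ℝ} (hbp : BoundaryParam Ω γ γ' γ'' L)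
    {a : ℝ} (ha : 0 < a)
    (hlow : ∀ᵐ t ∂(volume.restrict (Set.Icc 0 L)), a ≤ ‖γ'' t‖) :
    ∃ (n : ℝ → E2) (r R : ℝ), Body Ω γ γ' γ'' n L a r R := by
  obtain ⟨r, R, hr, hR0, hball, hR⟩ := exists_radii hopen hbdd h0
  obtain ⟨σ, hσ, hsr, hsup⟩ := exists_normal hconv hopen hr hball hbp
  obtain ⟨hL, hder, hcont, hunit, hper, himg, hinj, hii, hinteg⟩ := hbp
  have hσσ : σ * σ = 1 := by rcases hσ with rfl | rfl <;> norm_num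
  have hσabs : |σ| = 1 := by rcases hσ with rfl | rfl <;> norm_num
  have hfr : ∀ s, γ s ∈ frontier Ω := by
    intro s
    obtain ⟨y, hy, hyy⟩ := hper.exists_mem_Ico₀ hL s
    rw [hyy, ← himg]; exact mem_image_of_mem _ hy
  have hii' : ∀ s t : ℝ, IntervalIntegrable γ'' volume s t := fun s t => (hii s).symm.trans (hii t)
  have hsub : ∀ s t : ℝ, γ' t - γ' s = ∫ v in s..t, γ'' v := by
    intro s t
    rw [hinteg t, hinteg s, add_sub_add_left_eq_sub,
      intervalIntegral.integral_interval_sub_left (hii t) (hii s)]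
  have hloc : LocallyIntegrable γ'' volume := by
    rw [locallyIntegrable_iff]
    intro k hk
    obtain ⟨B, hB⟩ := hk.isBounded.subset_closedBall 0
    rw [Real.closedBall_eq_Icc] at hB
    refine IntegrableOn.mono_set ?_ hB
    rcases le_total (0 - B) (0 + B) with h | h
    · exact (intervalIntegrable_iff_integrableOn_Icc_of_le h).1 (hii' _ _)
    · refine (IntegrableOn.mono_set ((intervalIntegrable_iff_integrableOn_Icc_of_le
        (show (0 + B) ≤ 0 - B by linarith)).1 (hii' _ _)) ?_)
      intro x hx; constructor <;> linarith [hx.1, hx.2]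
  have hd' : ∀ᵐ v, HasDerivAt γ' (γ'' v) v := by
    filter_upwards [LocallyIntegrable.ae_hasDerivAt_integral hloc] with v hv
    have h := (hv 0).const_add (γ' 0)
    exact h.congr_of_eventuallyEq (Filter.Eventually.of_forall hinteg)
  have hper' : Function.Periodic γ' L := by
    intro s
    have h1 := (hder (s + L)).comp_add_const s L
    have h2 : (fun x => γ (x + L)) = γ := funext hper
    rw [h2] at h1
    exact h1.unique (hder s)
  have hP : ∀ᵐ v, v ∈ Icc 0 L → (HasDerivAt γ' (γ'' v) v ∧ a ≤ ‖γ'' v‖) := by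
    filter_upwards [hd', (ae_restrict_iff' measurableSet_Icc).1 hlow] with v h1 h2 hv
    exact ⟨h1, h2 hv⟩
  have hPk : ∀ᵐ v, ∀ k : ℤ, (v - k * L) ∈ Icc 0 L →
      (HasDerivAt γ' (γ'' (v - k * L)) (v - k * L) ∧ a ≤ ‖γ'' (v - k * L)‖) := by
    rw [ae_all_iff]
    intro k
    exact (measurePreserving_sub_right volume ((k : ℝ) * L)).quasiMeasurePreserving.ae hP
  have hnperp : ∀ s, ⟪γ' s, σ • rot (γ' s)⟫ = 0 := by
    intro s
    simp only [real_inner_smul_right, inner_two, rot_zero_coord, rot_one_coord]; ring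
  have hexpand : ∀ s v, v = ⟪v, γ' s⟫ • γ' s + ⟪v, σ • rot (γ' s)⟫ • (σ • rot (γ' s)) := by
    intro s v
    rw [real_inner_smul_right, smul_smul]
    have : σ * ⟪v, rot (γ' s)⟫ * σ = ⟪v, rot (γ' s)⟫ := by
      linear_combination ⟪v, rot (γ' s)⟫ * hσσ
    rw [this]
    exact onb_expand _ v (hunit s)
  refine ⟨fun s => σ • rot (γ' s), r, R, hL, ha, hr, hR0, hconv, h0, hball, hR, hder, hcont, hunit,
    hper, himg, hfr, hii', hsub, ?_, ?_, hnperp, ?_, hexpand, hsr, hsup, ⟨σ, hσ, fun _ => rfl⟩, ?_⟩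
  · intro s; rw [norm_smul, norm_rot, hunit, Real.norm_eq_abs, hσabs, mul_one]
  · exact (rot_cont.comp hcont).const_smul σ
  · intro s t
    rw [← smul_sub, rot_sub, norm_smul, norm_rot, Real.norm_eq_abs, hσabs, one_mul]
  filter_upwards [hd', hPk] with v hv hk
  -- the curvature vector is bounded below, by periodicity
  have hlow' : a ≤ ‖γ'' v‖ := by
    have hmem := sub_toIcoDiv_zsmul_mem_Ico hL 0 v
    set k := toIcoDiv hL 0 v
    rw [zero_add, zsmul_eq_mul] at hmem
    obtain ⟨h1, h2⟩ := hk k (Ico_subset_Icc_self hmem)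
    have h3 : (fun x => γ' (x - k * L)) = γ' := funext fun x => hper'.sub_int_mul_eq k
    have h4 := h1.comp_sub_const v (k * L)
    rw [h3] at h4
    rwa [h4.unique hv] at h2
  have horth : ⟪γ'' v, γ' v⟫ = 0 := by
    have h1 := hv.inner ℝ hv
    have h2 : (fun t => ⟪γ' t, γ' t⟫) = fun _ => (1:ℝ) := by
      funext t; rw [real_inner_self_eq_norm_sq, hunit]; norm_num
    rw [h2] at h1
    have := h1.unique (hasDerivAt_const v (1:ℝ))
    rw [real_inner_comm (γ'' v) (γ' v)] at this
    linarith
  have hsign : ⟪γ'' v, σ • rot (γ' v)⟫ ≤ 0 := by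
    have h1 := (hasDerivAt_iff_tendsto_slope.1 (hder v))
    have h2 := (hasDerivAt_iff_tendsto_slope.1 (rot_hasDerivAt hv σ))
    have h3 := h1.inner (𝕜 := ℝ) h2
    have h4 : 0 ≤ ⟪γ' v, σ • rot (γ'' v)⟫ := by
      refine ge_of_tendsto h3 (Filter.Eventually.of_forall fun u => ?_)
      simp only [slope, vsub_eq_sub, real_inner_smul_left, real_inner_smul_right]
      rw [← mul_assoc]
      apply mul_nonneg (mul_self_nonneg _)
      have e1 := hsup v _ (frontier_subset_closure (hfr u))
      have e2 := hsup u _ (frontier_subset_closure (hfr v))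
      rw [inner_sub_left, inner_sub_right, inner_sub_right]
      linarith
    rw [real_inner_smul_right, inner_rot, real_inner_comm] at h4
    rw [real_inner_smul_right]
    linarith
  have hexp := hexpand v (γ'' v)
  rw [horth, zero_smul, zero_add] at hexp
  refine ⟨-⟪γ'' v, σ • rot (γ' v)⟫, ?_, by rw [neg_smul, neg_neg]; exact hexp⟩
  have := congrArg norm hexp
  rw [norm_smul, norm_smul, norm_rot, hunit, Real.norm_eq_abs, Real.norm_eq_abs, hσabs, abs_of_nonpos hsign] at this
  linarith

/-! ### Uniform convexity -/

namespace Body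

variable {Ω : Set E2} {γ γ' γ'' n : ℝ → E2} {L a r R : ℝ}

/-- Every direction is an outer normal: at the boundary point maximising `⟪·, x⟫`, the normal is
`x / ‖x‖`. -/
lemma exists_dir (b : Body Ω γ γ' γ'' n L a r R) {x : E2} (hx : x ≠ 0) :
    ∃ s ∈ Ico 0 L, x = ‖x‖ • n s := by
  have hx0 : 0 < ‖x‖ := norm_pos_iff.2 hx
  have hcomp : IsCompact (closure Ω) := by
    refine Metric.isCompact_of_isClosed_isBounded isClosed_closure ?_
    exact (Metric.isBounded_closedBall (x := (0:E2)) (r := R)).subset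
      fun y hy => by simpa using b.le_R y hy
  obtain ⟨y, hy, hmax⟩ := hcomp.exists_isMaxOn ⟨0, subset_closure b.zero_mem⟩
    (f := fun y => ⟪y, x⟫) (by fun_prop)
  have hmax' : ∀ z ∈ closure Ω, ⟪z, x⟫ ≤ ⟪y, x⟫ := fun z hz => hmax hz
  have hyfr : y ∈ frontier Ω := by
    refine ⟨hy, fun hinteg => ?_⟩
    obtain ⟨ε, hε, hb⟩ := Metric.isOpen_iff.1 isOpen_interior y hinteg
    have hz : y + (ε / 2 / ‖x‖) • x ∈ Metric.ball y ε := by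
      rw [Metric.mem_ball, dist_eq_norm, add_sub_cancel_left, norm_smul, Real.norm_eq_abs,
        abs_of_pos (by positivity), div_mul_cancel₀ _ hx0.ne']
      linarith
    have := hmax' _ (subset_closure (interior_subset (hb hz)))
    rw [inner_add_left, real_inner_smul_left, real_inner_self_eq_norm_sq] at this
    have : 0 < ε / 2 / ‖x‖ * ‖x‖ ^ 2 := by positivity
    linarith
  have hpos : 0 < ⟪y, x⟫ := by
    have hz : (r / ‖x‖) • x ∈ Metric.closedBall (0:E2) r := by
      rw [mem_closedBall_zero_iff, norm_smul, Real.norm_eq_abs, abs_of_pos (div_pos b.rpos hx0),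
        div_mul_cancel₀ _ hx0.ne']
    have := hmax' _ (subset_closure (b.ball hz))
    rw [real_inner_smul_left, real_inner_self_eq_norm_sq] at this
    have h2 : 0 < r / ‖x‖ * ‖x‖ ^ 2 := mul_pos (div_pos b.rpos hx0) (by positivity)
    linarith
  rw [← b.img] at hyfr
  obtain ⟨s, hs, rfl⟩ := hyfr
  refine ⟨s, hs, ?_⟩
  have horth : ⟪γ' s, x⟫ = 0 := by
    have hd : HasDerivAt (fun u => ⟪γ u, x⟫) ⟪γ' s, x⟫ s := by
      simpa using (b.der s).inner ℝ (hasDerivAt_const s x)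
    have hm : IsLocalMax (fun u => ⟪γ u, x⟫) s :=
      Filter.Eventually.of_forall fun u => hmax' _ (frontier_subset_closure (b.fr u))
    exact hm.hasDerivAt_eq_zero hd
  have hexp := b.expand s x
  rw [real_inner_comm, horth, zero_smul, zero_add] at hexp
  have hn := congrArg norm hexp
  rw [norm_smul, b.n_unit, mul_one, Real.norm_eq_abs] at hn
  have hp : 0 < ⟪x, n s⟫ := by
    rw [hexp, real_inner_smul_right] at hpos
    exact pos_of_mul_pos_left hpos (b.rpos.le.trans (b.supp_r s))
  rw [abs_of_pos hp] at hn
  rw [hn]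
  exact hexp

lemma inner_ge_of_close {u v : E2} (hu : ‖u‖ = 1) (hv : ‖v‖ = 1) (h : ‖u - v‖ ≤ 1) :
    1 / 2 ≤ ⟪u, v⟫ := by
  have := norm_sub_sq_real u v
  rw [hu, hv] at this
  nlinarith [norm_nonneg (u - v)]

lemma cont (b : Body Ω γ γ' γ'' n L a r R) : Continuous γ :=
  continuous_iff_continuousAt.2 fun s => (b.der s).continuousAt

/-- Near `γ s` the boundary lies below its tangent line at least quadratically, uniformly in `s`. -/
lemma exists_local (b : Body Ω γ γ' γ'' n L a r R) : ∃ η : ℝ, 0 < η ∧ ∀ s ∈ Icc 0 L, ∀ u,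
    |u - s| ≤ η → 1 / 2 ≤ ⟪γ' u, γ' s⟫ ∧ 1 / 2 ≤ ⟪n u, n s⟫ ∧ a / 4 * (u - s) ^ 2 ≤ ⟪γ s - γ u, n s⟫ := by
  have huc : UniformContinuousOn γ' (Icc (-1) (L + 1)) :=
    isCompact_Icc.uniformContinuousOn_of_continuous b.cont'.continuousOn
  obtain ⟨δ, hδ, hcl⟩ := Metric.uniformContinuousOn_iff.1 huc 1 one_pos
  refine ⟨min 1 (δ / 2), by positivity, ?_⟩
  intro s hs
  have hclose : ∀ u, |u - s| ≤ min 1 (δ / 2) → ‖γ' u - γ' s‖ ≤ 1 := by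
    intro u hu
    have h1 := hu.trans (min_le_left _ _)
    have h2 := hu.trans (min_le_right _ _)
    rw [abs_le] at h1
    rw [← dist_eq_norm]
    refine (hcl u ⟨by linarith [hs.1], by linarith [hs.2]⟩ s ⟨by linarith [hs.1], by linarith [hs.2]⟩ ?_).le
    rw [Real.dist_eq]; linarith
  set η := min 1 (δ / 2) with hη
  have hη0 : 0 < η := by positivity
  have hnn : ∀ u, |u - s| ≤ η → 1 / 2 ≤ ⟪n u, n s⟫ := fun u hu =>
    inner_ge_of_close (b.n_unit _) (b.n_unit _) ((b.n_sub u s).trans_le (hclose u hu))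
  -- the normal component of the tangent is the integral of the curvature times `⟪n v, n s⟫`
  have hinteg : ∀ u w, IntervalIntegrable (fun v => -⟪n s, γ'' v⟫) volume u w := fun u w =>
    by
    have h := b.ii u w
    exact IntervalIntegrable.neg
      ⟨(innerSL ℝ (n s)).integrable_comp h.1, (innerSL ℝ (n s)).integrable_comp h.2⟩
  have hval : ∀ u w, ∫ v in u..w, -⟪n s, γ'' v⟫ = -⟪n s, γ' w - γ' u⟫ := by
    intro u w
    rw [intervalIntegral.integral_neg, b.sub_eq u w]
    exact congrArg Neg.neg ((innerSL ℝ (n s)).intervalIntegral_comp_comm (b.ii u w))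
  have hlow : ∀ u w, u ≤ w → |u - s| ≤ η → |w - s| ≤ η →
      a / 2 * (w - u) ≤ -⟪n s, γ' w - γ' u⟫ := by
    intro u w huw hu hw
    rw [← hval]
    have : a / 2 * (w - u) = ∫ v in u..w, a / 2 := by simp; ring
    rw [this]
    refine intervalIntegral.integral_mono_ae_restrict huw intervalIntegrable_const (hinteg u w) ?_
    rw [Filter.EventuallyLE, ae_restrict_iff' measurableSet_Icc]
    filter_upwards [b.curv] with v hv hvm
    obtain ⟨k, hk, hkv⟩ := hv
    rw [hkv, inner_neg_right, neg_neg, real_inner_smul_right, real_inner_comm]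
    have : |v - s| ≤ η := by
      rw [abs_le] at hu hw ⊢
      constructor <;> linarith [hvm.1, hvm.2]
    nlinarith [hnn v this, b.apos]
  have hd : ∀ u, HasDerivAt (fun u => ⟪γ s - γ u, n s⟫ - a / 4 * (u - s) ^ 2)
      (-⟪n s, γ' u - γ' s⟫ - a / 2 * (u - s)) u := by
    intro u
    have h1 : HasDerivAt (fun u => ⟪γ s - γ u, n s⟫) (-⟪n s, γ' u - γ' s⟫) u := by
      have := ((b.der u).const_sub (γ s)).inner ℝ (hasDerivAt_const u (n s))
      have e : -⟪n s, γ' u - γ' s⟫ = ⟪γ s - γ u, (0:E2)⟫ + ⟪-γ' u, n s⟫ := by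
        rw [inner_zero_right, inner_neg_left, inner_sub_right, real_inner_comm (γ' s) (n s),
          b.n_perp, real_inner_comm (γ' u)]
        ring
      rw [e]; exact this
    have h2 : HasDerivAt (fun u => a / 4 * (u - s) ^ 2) (a / 2 * (u - s)) u := by
      have := (((hasDerivAt_id u).sub_const s).pow 2).const_mul (a / 4)
      have e : a / 2 * (u - s) = a / 4 * (((2:ℕ) : ℝ) * (u - s) ^ (2 - 1) * 1) := by
        norm_num; ring
      rw [e]; exact this
    exact h1.sub h2
  set F := fun u => ⟪γ s - γ u, n s⟫ - a / 4 * (u - s) ^ 2 with hF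
  have hFs : F s = 0 := by simp [hF]
  have hFc : Continuous F := continuous_iff_continuousAt.2 fun u => (hd u).continuousAt
  intro u hu
  refine ⟨inner_ge_of_close (b.unit _) (b.unit _) (hclose u hu), hnn u hu, ?_⟩
  suffices 0 ≤ F u by simp only [hF] at this; linarith
  rw [abs_le] at hu
  rcases le_total s u with h | h
  · have hm : MonotoneOn F (Icc s (s + η)) := by
      refine monotoneOn_of_hasDerivWithinAt_nonneg (convex_Icc _ _) hFc.continuousOn
        (fun x _ => (hd x).hasDerivWithinAt) ?_
      intro x hx
      rw [interior_Icc] at hx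
      have := hlow s x hx.1.le (by simpa using hη0.le) (by rw [abs_le]; constructor <;> linarith [hx.1, hx.2])
      linarith
    rw [← hFs]
    exact hm ⟨le_rfl, by linarith⟩ ⟨h, by linarith⟩ h
  · have hm : AntitoneOn F (Icc (s - η) s) := by
      refine antitoneOn_of_hasDerivWithinAt_nonpos (convex_Icc _ _) hFc.continuousOn
        (fun x _ => (hd x).hasDerivWithinAt) ?_
      intro x hx
      rw [interior_Icc] at hx
      have := hlow x s hx.2.le (by rw [abs_le]; constructor <;> linarith [hx.1, hx.2]) (by simpa using hη0.le)
      rw [← neg_sub (γ' x), inner_neg_right] at this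
      linarith
    rw [← hFs]
    exact hm ⟨by linarith, h⟩ ⟨by linarith, le_rfl⟩ h

/-- The curvature bound makes the body uniformly convex: at each boundary point it lies in a tangent
disc, whose radius does not depend on the point. -/
lemma strong_convex (b : Body Ω γ γ' γ'' n L a r R) : ∃ c : ℝ, 0 < c ∧ ∀ s ∈ Icc 0 L,
    ∀ y ∈ closure Ω, c * ‖y - γ s‖ ^ 2 ≤ ⟪γ s - y, n s⟫ := by
  obtain ⟨η, hη, hloc⟩ := b.exists_local
  have ha := b.apos
  have hR := b.Rpos
  set l := min 1 (η / (4 * R)) with hl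
  have hl0 : 0 < l := by positivity
  have hl1 : l ≤ 1 := min_le_left _ _
  have hl2 : l * (2 * R) ≤ η / 2 := by
    calc l * (2 * R) ≤ η / (4 * R) * (2 * R) := by gcongr; exact min_le_right _ _
      _ = η / 2 := by field_simp; norm_num
  refine ⟨1 / (4 / (a * l) + 2 * R), by positivity, ?_⟩
  intro s hs y hy
  set Y := ⟪y - γ s, γ' s⟫ with hY
  set F := ⟪γ s - y, n s⟫ with hF
  have hFn : ⟪y - γ s, n s⟫ = -F := by rw [hF, ← neg_sub, inner_neg_left]
  have hd2 : ‖y - γ s‖ ≤ 2 * R := by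
    calc ‖y - γ s‖ ≤ ‖y‖ + ‖γ s‖ := norm_sub_le _ _
      _ ≤ R + R := add_le_add (b.le_R y hy) (b.le_R _ (frontier_subset_closure (b.fr s)))
      _ = _ := by ring
  have hF0 : 0 ≤ F := by
    have := b.supp s y hy
    rw [hF, inner_sub_left]; linarith
  have hFR : F ≤ 2 * R := by
    have := real_inner_le_norm (γ s - y) (n s)
    rw [b.n_unit, mul_one, norm_sub_rev] at this
    exact this.trans hd2
  have hYR : |Y| ≤ 2 * R := by
    have := abs_real_inner_le_norm (y - γ s) (γ' s)
    rw [b.unit, mul_one] at this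
    exact this.trans hd2
  have hnorm : ‖y - γ s‖ ^ 2 = Y ^ 2 + F ^ 2 := by
    rw [← real_inner_self_eq_norm_sq]
    nth_rw 2 [b.expand s (y - γ s)]
    rw [inner_add_right, real_inner_smul_right, real_inner_smul_right, hFn]
    ring
  have key : a / 4 * l * Y ^ 2 ≤ F := by
    set p := fun u => ⟪γ u - γ s, γ' s⟫ with hp
    have hpd : ∀ u, HasDerivAt p ⟪γ' u, γ' s⟫ u := by
      intro u
      simpa using ((b.der u).sub_const (γ s)).inner ℝ (hasDerivAt_const u (γ' s))
    have hpc : Continuous p := continuous_iff_continuousAt.2 fun u => (hpd u).continuousAt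
    have hps : p s = 0 := by simp [hp]
    have hplow : ∀ u w, s - η ≤ u → u ≤ w → w ≤ s + η → 1 / 2 * (w - u) ≤ p w - p u := by
      intro u w hu huw hw
      refine Convex.mul_sub_le_image_sub_of_le_deriv (convex_Icc u w) hpc.continuousOn
        (fun x _ => (hpd x).differentiableAt.differentiableWithinAt) ?_ u ⟨le_rfl, huw⟩ w ⟨huw, le_rfl⟩ huw
      intro x hx
      rw [interior_Icc] at hx
      rw [(hpd x).deriv]
      exact (hloc s hs x (by rw [abs_le]; constructor <;> linarith [hx.1, hx.2])).1
    have hlY : |l * Y| ≤ η / 2 := by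
      rw [abs_mul, abs_of_pos hl0]
      exact (mul_le_mul_of_nonneg_left hYR hl0.le).trans hl2
    rw [abs_le] at hlY
    have h1 := hplow s (s + η) (by linarith) (by linarith) le_rfl
    have h2 := hplow (s - η) s le_rfl (by linarith) (by linarith)
    rw [hps] at h1 h2
    obtain ⟨u, hu, hpu⟩ := intermediate_value_Icc (show s - η ≤ s + η by linarith)
      hpc.continuousOn (show l * Y ∈ Icc (p (s - η)) (p (s + η)) from
        ⟨by linarith, by linarith⟩)
    have hus : |u - s| ≤ η := by rw [abs_le]; constructor <;> linarith [hu.1, hu.2]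
    obtain ⟨_, hnu, hfu⟩ := hloc s hs u hus
    -- `p` is 1-Lipschitz, so `u` is at distance at least `l |Y|` from `s`
    have hlip : |l * Y| ≤ |u - s| := by
      have := Convex.norm_image_sub_le_of_norm_hasDerivWithin_le (f := p) (C := 1) (s := univ)
        (x := s) (y := u) (fun x _ => (hpd x).hasDerivWithinAt) (fun x _ => by
          have := norm_inner_le_norm (𝕜 := ℝ) (γ' x) (γ' s)
          rw [b.unit, b.unit] at this; simpa using this) convex_univ trivial trivial
      rw [hps, hpu, sub_zero, one_mul] at this
      simpa using this
    -- support inequality at `γ u`, tested at `γ s + l (y - γ s)`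
    set z := γ s + l • (y - γ s) with hz
    have hzc : z ∈ closure Ω :=
      b.conv.closure.add_smul_sub_mem (frontier_subset_closure (b.fr s)) hy ⟨hl0.le, hl1⟩
    have hsz := b.supp u z hzc
    have hzu : z - γ u = (-(l * F) + ⟪γ s - γ u, n s⟫) • n s := by
      have e := b.expand s (z - γ u)
      have e1 : ⟪z - γ u, γ' s⟫ = 0 := by
        have : z - γ u = l • (y - γ s) - (γ u - γ s) := by rw [hz]; abel
        rw [this, inner_sub_left, real_inner_smul_left]
        have : p u = ⟪γ u - γ s, γ' s⟫ := rfl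
        linarith
      have e2 : ⟪z - γ u, n s⟫ = -(l * F) + ⟪γ s - γ u, n s⟫ := by
        have : z - γ u = l • (y - γ s) + (γ s - γ u) := by rw [hz]; abel
        rw [this, inner_add_left, real_inner_smul_left, hFn]; ring
      rw [e1, e2, zero_smul, zero_add] at e
      exact e
    have hle : -(l * F) + ⟪γ s - γ u, n s⟫ ≤ 0 := by
      have h5 : ⟪z - γ u, n u⟫ ≤ 0 := by rw [inner_sub_left]; linarith
      rw [hzu, real_inner_smul_left, real_inner_comm (n u) (n s)] at h5
      nlinarith
    have hsq : (l * Y) ^ 2 ≤ (u - s) ^ 2 := sq_le_sq.2 hlip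
    have : a / 4 * (l * Y) ^ 2 ≤ l * F := by nlinarith
    have h3 : l * (a / 4 * l * Y ^ 2) ≤ l * F := by linarith
    exact le_of_mul_le_mul_left h3 hl0
  rw [hnorm, one_div, inv_mul_le_iff₀ (by positivity)]
  have k2 : Y ^ 2 ≤ 4 / (a * l) * F := by
    rw [div_mul_eq_mul_div, le_div_iff₀ (by positivity)]
    linarith
  nlinarith

end Body

/-! ### Tangent functions of the support function, rotation of the boundary -/

namespace Body

variable {Ω : Set E2} {γ γ' γ'' n : ℝ → E2} {L a r R : ℝ}

lemma supp_eq (b : Body Ω γ γ' γ'' n L a r R) {x : E2} {s : ℝ} (hx : x = ‖x‖ • n s) :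
    suppFn Ω x = ⟪γ s, x⟫ := by
  apply le_antisymm
  · apply supp_le ⟨0, b.zero_mem⟩
    intro y hy
    rw [hx, real_inner_smul_right, real_inner_smul_right]
    gcongr
    exact b.supp s y (subset_closure hy)
  · exact inner_le_supp b.le_R x (frontier_subset_closure (b.fr s))

/-- Uniform convexity of `Ω` is `C^{1,1}` smoothness of its support function: near `x` the support
function stays within a quadratic error of its tangent function `⟪γ s, ·⟫`. -/
lemma supp_quad (b : Body Ω γ γ' γ'' n L a r R) : ∃ c : ℝ, 0 < c ∧ ∀ s ∈ Icc 0 L, ∀ x : E2,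
    x ≠ 0 → x = ‖x‖ • n s → ∀ y, suppFn Ω y ≤ ⟪γ s, y⟫ + c * ‖y - x‖ ^ 2 / ‖x‖ := by
  obtain ⟨c, hc, hsc⟩ := b.strong_convex
  refine ⟨1 / c, by positivity, ?_⟩
  intro s hs x hx0 hx y
  have hxp : 0 < ‖x‖ := norm_pos_iff.2 hx0
  apply supp_le ⟨0, b.zero_mem⟩
  intro z hz
  have h1 := hsc s hs z (subset_closure hz)
  have h2 : ⟪z - γ s, y - x⟫ ≤ ‖z - γ s‖ * ‖y - x‖ := real_inner_le_norm _ _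
  have h3 : ⟪z - γ s, x⟫ ≤ -(‖x‖ * (c * ‖z - γ s‖ ^ 2)) := by
    have e : ⟪z - γ s, x⟫ = -(‖x‖ * ⟪γ s - z, n s⟫) := by
      conv_lhs => rw [hx, real_inner_smul_right, ← neg_sub (γ s) z, inner_neg_left]
      ring
    rw [e]
    gcongr
  have h4 : ⟪z, y⟫ = ⟪γ s, y⟫ + ⟪z - γ s, y - x⟫ + ⟪z - γ s, x⟫ := by
    simp only [inner_sub_left, inner_sub_right]; ring
  have h5 : ‖z - γ s‖ * ‖y - x‖ - ‖x‖ * (c * ‖z - γ s‖ ^ 2) ≤ 1 / c * ‖y - x‖ ^ 2 / ‖x‖ := by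
    rw [le_div_iff₀ hxp, one_div, ← div_eq_inv_mul, le_div_iff₀ hc]
    nlinarith [sq_nonneg (‖y - x‖ - 2 * (c * ‖x‖ * ‖z - γ s‖)), sq_nonneg (‖y - x‖)]
  linarith

/-- The boundary turns about the origin at a definite rate. -/
lemma cross_ge (b : Body Ω γ γ' γ'' n L a r R) {s s' : ℝ} (h : s ≤ s') (hc : s' - s ≤ r / 2) :
    r / 2 * (s' - s) ≤ |γ s 0 * γ s' 1 - γ s 1 * γ s' 0| := by
  obtain ⟨σ, hσ, hn⟩ := b.n_rot
  have hσσ : σ * σ = 1 := by rcases hσ with rfl | rfl <;> norm_num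
  have hσabs : |σ| = 1 := by rcases hσ with rfl | rfl <;> norm_num
  set φ : ℝ → ℝ := fun u => -σ * ⟪rot (γ s), γ u⟫ with hφ
  have hd : ∀ u, HasDerivAt φ ⟪γ s, n u⟫ u := by
    intro u
    have h1 := ((hasDerivAt_const u (rot (γ s))).inner ℝ (b.der u)).const_mul (-σ)
    have e : ⟪γ s, n u⟫ = -σ * (⟪rot (γ s), γ' u⟫ + ⟪(0:E2), γ u⟫) := by
      rw [hn, real_inner_smul_right, inner_rot, inner_zero_left]; ring
    rw [e]; exact h1
  have hlip : ∀ u, ‖γ s - γ u‖ ≤ |s - u| := by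
    intro u
    have := Convex.norm_image_sub_le_of_norm_hasDerivWithin_le (f := γ) (C := 1) (s := univ)
      (x := u) (y := s) (fun x _ => (b.der x).hasDerivWithinAt) (fun x _ => (b.unit x).le)
      convex_univ trivial trivial
    simpa using this
  have hc : Continuous φ := continuous_iff_continuousAt.2 fun u => (hd u).continuousAt
  have hmain : r / 2 * (s' - s) ≤ φ s' - φ s := by
    refine Convex.mul_sub_le_image_sub_of_le_deriv (convex_Icc s s') hc.continuousOn
      (fun x _ => (hd x).differentiableAt.differentiableWithinAt) ?_ s ⟨le_rfl, h⟩ s' ⟨h, le_rfl⟩ h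
    intro u hu
    rw [interior_Icc] at hu
    rw [(hd u).deriv]
    have h1 := b.supp_r u
    have h2 := real_inner_le_norm (γ u - γ s) (n u)
    rw [b.n_unit, mul_one, norm_sub_rev, inner_sub_left] at h2
    have h3 := hlip u
    rw [abs_of_nonpos (by linarith [hu.1])] at h3
    linarith [hu.2]
  have e1 : φ s = 0 := by
    simp only [hφ, inner_two, rot_zero_coord, rot_one_coord]; ring
  have e2 : φ s' = -σ * (γ s 0 * γ s' 1 - γ s 1 * γ s' 0) := by
    simp only [hφ, inner_two, rot_zero_coord, rot_one_coord]; ring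
  rw [e1, e2, sub_zero] at hmain
  refine hmain.trans ((le_abs_self _).trans ?_)
  rw [abs_mul, abs_neg, hσabs, one_mul]

/-- The normal turns by at most the total curvature of the arc. -/
lemma n_var (b : Body Ω γ γ' γ'' n L a r R) {s s' : ℝ} (h : s ≤ s') :
    ‖n s - n s'‖ ≤ (∫ v in (0:ℝ)..s', ‖γ'' v‖) - ∫ v in (0:ℝ)..s, ‖γ'' v‖ := by
  rw [b.n_sub, norm_sub_rev, b.sub_eq,
    intervalIntegral.integral_interval_sub_left (b.ii _ _).norm (b.ii _ _).norm]
  exact intervalIntegral.norm_integral_le_integral_norm h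

end Body

/-! ### Discrepancy in one box -/

/-- The discrepancy between lattice points and area for the part of `K` in one grid box. -/
def boxDev (K : Set E2) (H : ℕ) (m : Fin 2 → ℤ) : ℝ :=
  latMeas.real (K ∩ gridBox H m) - volume.real (K ∩ gridBox H m)

/-- `ν` is almost orthogonal to a nonzero integer vector with entries at most `N`: the direction
orthogonal to `ν` is too close to a rational one of small height. -/
def BadDir (R : ℝ) (N : ℕ) (ν : E2) : Prop :=
  ∃ p : Fin 2 → ℤ, p ≠ 0 ∧ (∀ i, |p i| ≤ N) ∧ |ν 0 * p 0 + ν 1 * p 1| ≤ R / (N : ℝ) ^ 5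

/-- Dirichlet approximation of the slope: either the direction is bad, or the slope has a rational
approximation whose denominator lies between `N` and `N ^ 5`. -/
lemma dirichlet_slope {R : ℝ} {N : ℕ} (hN : 1 ≤ N) {ν : E2} {i j : Fin 2} (hij : i ≠ j)
    (hνR : |ν j| ≤ R) (hν : 0 < |ν j|) (hle : |ν i| ≤ |ν j|) (hbad : ¬ BadDir R N ν) :
    ∃ (p : ℤ) (q : ℕ), N < q ∧ q ≤ N ^ 5 ∧ IsCoprime p (q : ℤ) ∧
      |ν i / ν j - p / q| ≤ 1 / (q : ℝ) ^ 2 := by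
  have hθ : |ν i / ν j| ≤ 1 := by rw [abs_div, div_le_one hν]; exact hle
  have hν0 : ν j ≠ 0 := abs_pos.1 hν
  have hN5 : 0 < N ^ 5 := by positivity
  obtain ⟨q, hq1, hq2⟩ := Real.exists_rat_abs_sub_le_and_den_le (ν i / ν j) hN5
  have hd0 : (0:ℝ) < q.den := by exact_mod_cast q.den_pos
  have hqe : (q : ℝ) = q.num / q.den := Rat.cast_def q
  have hNr : (1:ℝ) ≤ ((N ^ 5 : ℕ) : ℝ) := by exact_mod_cast hN5
  rw [hqe] at hq1
  by_cases hsmall : q.den ≤ N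
  · exfalso
    apply hbad
    have hmul : |ν i / ν j * q.den - q.num| ≤ 1 / (((N ^ 5 : ℕ) : ℝ) + 1) := by
      have : ν i / ν j * q.den - q.num = (ν i / ν j - q.num / q.den) * q.den := by
        field_simp
      rw [this, abs_mul, abs_of_pos hd0]
      calc _ ≤ 1 / ((((N ^ 5 : ℕ) : ℝ) + 1) * q.den) * q.den := by gcongr
        _ = _ := by field_simp
    have hnum : |q.num| ≤ N := by
      have h1 : |(q.num : ℝ)| < q.den + 1 := by
        have e : (q.num : ℝ) = ν i / ν j * q.den - (ν i / ν j * q.den - q.num) := by ring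
        have h2 : |ν i / ν j * q.den| ≤ q.den := by
          rw [abs_mul, abs_of_pos hd0]; nlinarith
        have h3 : 1 / (((N ^ 5 : ℕ) : ℝ) + 1) < 1 := by
          rw [div_lt_one (by positivity)]; linarith
        rw [e]
        exact (abs_sub _ _).trans_lt (by linarith)
      have h2 : |q.num| < q.den + 1 := by exact_mod_cast h1
      have : (q.den : ℤ) ≤ N := by exact_mod_cast hsmall
      omega
    have hval : |ν i * q.den - ν j * q.num| ≤ R / (N : ℝ) ^ 5 := by
      have : ν i * q.den - ν j * q.num = ν j * (ν i / ν j * q.den - q.num) := by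
        field_simp
      rw [this, abs_mul, div_eq_mul_one_div R]
      refine mul_le_mul hνR (hmul.trans ?_) (abs_nonneg _) ((abs_nonneg _).trans hνR)
      push_cast
      gcongr
      linarith
    refine ⟨fun k => if k = i then (q.den : ℤ) else -q.num, ?_, ?_, ?_⟩
    · intro h
      have := congrFun h i
      simp at this
    · intro k
      by_cases hk : k = i
      · simp [hk, hsmall]
      · simp [hk, hnum]
    · fin_cases i <;> fin_cases j <;> simp_all
      · rw [← sub_eq_add_neg]; exact hval
      · rw [add_comm, ← sub_eq_add_neg]; exact hval
  · push Not at hsmall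
    refine ⟨q.num, q.den, hsmall, hq2, ?_, hq1.trans ?_⟩
    · rw [Int.isCoprime_iff_gcd_eq_one]
      simpa [Int.gcd] using q.reduced
    · rw [sq]
      gcongr
      have : (q.den : ℝ) ≤ ((N ^ 5 : ℕ) : ℝ) := by exact_mod_cast hq2
      linarith

namespace Body

variable {Ω : Set E2} {γ γ' γ'' n : ℝ → E2} {L a r R : ℝ}

lemma le_norm (b : Body Ω γ γ' γ'' n L a r R) (s : ℝ) : r ≤ ‖γ s‖ := by
  have := real_inner_le_norm (γ s) (n s)
  rw [b.n_unit, mul_one] at this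
  exact (b.supp_r s).trans this

lemma norm_le (b : Body Ω γ γ' γ'' n L a r R) (s : ℝ) : ‖γ s‖ ≤ R :=
  b.le_R _ (frontier_subset_closure (b.fr s))

/-- In a box of side `N ^ 6` meeting the boundary of the dilated polar set, the discrepancy is at
most a constant times the side, and smaller by a factor `N` unless the normal `γ s` is bad. -/
lemma box_bound (b : Body Ω γ γ' γ'' n L a r R) : ∃ C : ℝ, 0 < C ∧ ∀ (N : ℕ) (t : ℝ) (m : Fin 2 → ℤ)
    (x : E2) (s : ℝ), 1 ≤ N → (N : ℝ) ^ 13 ≤ t → x ∈ gridBox (N ^ 6) m → suppFn Ω x = t →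
    s ∈ Icc 0 L → x ≠ 0 → x = ‖x‖ • n s →
    |boxDev {x | suppFn Ω x ≤ t} (N ^ 6) m| ≤ C * (N : ℝ) ^ 6 ∧
    (¬ BadDir R N (γ s) → |boxDev {x | suppFn Ω x ≤ t} (N ^ 6) m| ≤ C * (N : ℝ) ^ 5) := by
  obtain ⟨c, hc, hquad⟩ := b.supp_quad
  have hr := b.rpos
  have hR := b.Rpos
  refine ⟨27 + 8 * c * R / r, by positivity, ?_⟩
  intro N t m x s hN hNt hxm hxt hs hx0 hxs
  have hNr : (1:ℝ) ≤ N := by exact_mod_cast hN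
  have hxp : 0 < ‖x‖ := norm_pos_iff.2 hx0
  have htpos : 0 < t := lt_of_lt_of_le (by positivity) hNt
  obtain ⟨i, j, hij, hle⟩ : ∃ i j : Fin 2, i ≠ j ∧ |γ s i| ≤ |γ s j| := by
    rcases le_total |γ s 0| |γ s 1| with h | h
    · exact ⟨0, 1, by simp, h⟩
    · exact ⟨1, 0, by simp, h⟩
  have hνj : r / 2 ≤ |γ s j| := by
    have h1 := b.le_norm s
    have h2 : ‖γ s‖ ≤ |γ s 0| + |γ s 1| := norm_le_coords _
    have h3 : |γ s 0| ≤ |γ s j| ∧ |γ s 1| ≤ |γ s j| := by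
      fin_cases i <;> fin_cases j
      · exact absurd rfl hij
      · exact ⟨hle, le_rfl⟩
      · exact ⟨le_rfl, hle⟩
      · exact absurd rfl hij
    linarith [h3.1, h3.2]
  have hνpos : 0 < |γ s j| := by linarith
  have hν0 : γ s j ≠ 0 := abs_pos.1 hνpos
  have hνR : |γ s j| ≤ R := (abs_coord_le _ _).trans (b.norm_le s)
  have hθ : |γ s i / γ s j| ≤ 1 := by rw [abs_div, div_le_one hνpos]; exact hle
  set H : ℕ := N ^ 6 with hH
  have hHr : (H : ℝ) = (N : ℝ) ^ 6 := by rw [hH]; push_cast; rfl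
  set ε : ℝ := c * (2 * (N : ℝ) ^ 6) ^ 2 / ‖x‖ with hε
  have hε0 : 0 ≤ ε := by positivity
  have hεb : ε ≤ 4 * c * R / N := by
    have h1 : t ≤ R * ‖x‖ := hxt ▸ supp_le_norm b.zero_mem b.le_R x
    rw [hε, div_le_div_iff₀ hxp (by linarith)]
    have : c * (2 * (N : ℝ) ^ 6) ^ 2 * N = 4 * c * (N : ℝ) ^ 13 := by ring
    rw [this]
    have : 4 * c * R * ‖x‖ = 4 * c * (R * ‖x‖) := by ring
    rw [this]
    gcongr
    linarith
  have herr : (H : ℝ) * (ε / |γ s j|) ≤ 8 * c * R / r * (N : ℝ) ^ 5 := by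
    calc (H : ℝ) * (ε / |γ s j|) ≤ (N : ℝ) ^ 6 * ((4 * c * R / N) / (r / 2)) := by
          rw [hHr]; gcongr
      _ = _ := by field_simp; ring
  have hup : {x | suppFn Ω x ≤ t} ∩ gridBox H m ⊆ halfPl (γ s) t := by
    rintro y ⟨hy, _⟩
    exact (inner_le_supp b.le_R y (frontier_subset_closure (b.fr s))).trans hy
  have hlo : halfPl (γ s) (t - ε) ∩ gridBox H m ⊆ {x | suppFn Ω x ≤ t} := by
    rintro y ⟨hy, hyb⟩
    have hy' : ⟪γ s, y⟫ ≤ t - ε := hy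
    have h1 := hquad s hs x hx0 hxs y
    have h2 : ‖y - x‖ ≤ 2 * (N : ℝ) ^ 6 := by
      have := gridBox_close hyb hxm
      rwa [hHr] at this
    have h3 : c * ‖y - x‖ ^ 2 / ‖x‖ ≤ ε := by rw [hε]; gcongr
    change suppFn Ω y ≤ t
    linarith
  have key := fun B hB => box_sandwich H m (γ s) i j hij hν0 {x | suppFn Ω x ≤ t} t ε B hε0 hup hlo hB
  have hpow : (N : ℝ) ^ 5 ≤ (N : ℝ) ^ 6 := pow_le_pow_right₀ hNr (by norm_num)
  have hK : 0 ≤ 8 * c * R / r := by positivity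
  constructor
  · have := key (2 * H) fun c' θ hθ' => sum_colErr_triv H c' θ (by
      rcases hθ' with rfl | rfl
      · exact hθ
      · rwa [abs_neg])
    rw [boxDev]
    refine this.trans ?_
    rw [hHr] at herr ⊢
    nlinarith
  · intro hbad
    obtain ⟨p, q, hq1, hq2, hcop, hpq⟩ := dirichlet_slope hN hij hνR hνpos hle hbad
    have hq0 : (0 : ℝ) < q := by exact_mod_cast (by omega : 0 < q)
    have hqN : (N : ℝ) ≤ q := by exact_mod_cast hq1.le
    have hqN5 : (q : ℝ) ≤ (N : ℝ) ^ 5 := by exact_mod_cast hq2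
    have hB : 6 * ((H : ℝ) / q) + 21 * q ≤ 27 * (N : ℝ) ^ 5 := by
      have : (H : ℝ) / q ≤ (N : ℝ) ^ 5 := by
        rw [hHr, div_le_iff₀ hq0]
        calc (N : ℝ) ^ 6 = (N : ℝ) ^ 5 * N := by ring
          _ ≤ _ := by gcongr
      linarith
    have := key (6 * (H / q) + 21 * q) fun c' θ hθ' => by
      rcases hθ' with rfl | rfl
      · exact sum_colErr_good H c' _ hθ p q (by omega) hcop hpq
      · refine sum_colErr_good H c' _ (by rwa [abs_neg]) (-p) q (by omega) hcop.neg_left ?_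
        rw [← abs_neg]
        convert hpq using 2
        push_cast; ring
    rw [boxDev]
    refine this.trans ?_
    nlinarith

end Body

/-! ### Counting boxes and bad normals -/

/-- Total curvature of the boundary arc from `γ 0` to `γ s`. -/
def totCurv (γ'' : ℝ → E2) (s : ℝ) : ℝ := ∫ v in (0:ℝ)..s, ‖γ'' v‖

lemma card_le_grid (S : Finset (Fin 2 → ℤ)) (D : ℕ)
    (h : ∀ m ∈ S, ∀ m' ∈ S, ∀ i, m i ≤ m' i + D) : S.card ≤ (D + 1) ^ 2 := by
  classical
  have hc : ∀ i : Fin 2, (S.image fun m => m i).card ≤ D + 1 := by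
    intro i
    apply card_le_of_close
    intro a ha c hc
    obtain ⟨m, hm, rfl⟩ := Finset.mem_image.1 ha
    obtain ⟨m', hm', rfl⟩ := Finset.mem_image.1 hc
    exact h m' hm' m hm i
  have : S.card ≤ ((S.image fun m => m 0) ×ˢ (S.image fun m => m 1)).card := by
    apply Finset.card_le_card_of_injOn (fun m => (m 0, m 1))
    · intro m hm
      simp only [Finset.coe_product, mem_prod, Finset.mem_coe]
      exact ⟨Finset.mem_image_of_mem _ hm, Finset.mem_image_of_mem _ hm⟩
    · intro m _ m' _ hmm
      simp only [Prod.mk.injEq] at hmm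
      funext i; fin_cases i
      · exact hmm.1
      · exact hmm.2
  rw [Finset.card_product] at this
  calc S.card ≤ _ := this
    _ ≤ (D + 1) * (D + 1) := Nat.mul_le_mul (hc 0) (hc 1)
    _ = _ := by ring

namespace Body

variable {Ω : Set E2} {γ γ' γ'' n : ℝ → E2} {L a r R : ℝ}

/-- Boundary points of the dilated polar set with close normal directions are close, hence lie in
boxes with close indices. -/
lemma box_near (b : Body Ω γ γ' γ'' n L a r R) : ∃ D : ℕ, ∀ (H : ℕ) (t : ℝ) (m m' : Fin 2 → ℤ)
    (x x' : E2) (s s' : ℝ), 0 < H → 0 < t → x ∈ gridBox H m → x' ∈ gridBox H m' →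
    suppFn Ω x = t → suppFn Ω x' = t → x = ‖x‖ • n s → x' = ‖x'‖ • n s' →
    ‖n s - n s'‖ ≤ H / t → ∀ i, m i ≤ m' i + D := by
  have hr := b.rpos
  have hR := b.Rpos
  obtain ⟨D, hD⟩ := exists_nat_ge (1 + (1 + R / r) / r)
  refine ⟨D, ?_⟩
  intro H t m m' x x' s s' hH ht hxm hxm' hxt hxt' hx hx' hnn i
  have hHr : (0:ℝ) < H := by exact_mod_cast hH
  have hb : ∀ y, suppFn Ω y = t → ‖y‖ ≤ t / r := by
    intro y hy
    rw [le_div_iff₀ hr, mul_comm, ← hy]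
    exact norm_le_supp hr b.ball b.le_R y
  have hpos : ∀ y, suppFn Ω y = t → 0 < ‖y‖ := by
    intro y hy
    have := supp_le_norm b.zero_mem b.le_R y
    rw [hy] at this
    exact pos_of_mul_pos_right (ht.trans_le this) hR.le
  have e1 : t = ‖x‖ * suppFn Ω (n s) := by
    rw [← supp_smul b.zero_mem b.le_R (hpos x hxt), ← hx, hxt]
  have e2 : t = ‖x'‖ * suppFn Ω (n s') := by
    rw [← supp_smul b.zero_mem b.le_R (hpos x' hxt'), ← hx', hxt']
  have hρ : r ≤ suppFn Ω (n s) := by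
    have := norm_le_supp hr b.ball b.le_R (n s)
    rwa [b.n_unit, mul_one] at this
  have hlip : |suppFn Ω (n s') - suppFn Ω (n s)| ≤ R * ‖n s - n s'‖ := by
    have h1 := supp_lip b.zero_mem b.le_R (n s) (n s')
    have h2 := supp_lip b.zero_mem b.le_R (n s') (n s)
    rw [norm_sub_rev] at h2
    rw [abs_le]; constructor <;> linarith
  have hdiff : |‖x‖ - ‖x'‖| ≤ t / r * (R / r) * ‖n s - n s'‖ := by
    have e : (‖x‖ - ‖x'‖) * suppFn Ω (n s) = ‖x'‖ * (suppFn Ω (n s') - suppFn Ω (n s)) := by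
      linear_combination e2 - e1
    have h1 : |‖x‖ - ‖x'‖| * r ≤ t / r * (R * ‖n s - n s'‖) := by
      calc |‖x‖ - ‖x'‖| * r ≤ |‖x‖ - ‖x'‖| * suppFn Ω (n s) := by gcongr
        _ = |(‖x‖ - ‖x'‖) * suppFn Ω (n s)| := by rw [abs_mul, abs_of_pos (hr.trans_le hρ)]
        _ = ‖x'‖ * |suppFn Ω (n s') - suppFn Ω (n s)| := by rw [e, abs_mul, abs_norm]
        _ ≤ _ := by gcongr; exact hb x' hxt'
    rw [← le_div_iff₀ hr] at h1
    refine h1.trans (le_of_eq ?_)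
    ring
  have hxx : ‖x - x'‖ ≤ H * ((1 + R / r) / r) := by
    have e : x - x' = ‖x‖ • (n s - n s') + (‖x‖ - ‖x'‖) • n s' := by
      rw [smul_sub, sub_smul, ← hx, ← hx']; abel
    calc ‖x - x'‖ ≤ ‖x‖ * ‖n s - n s'‖ + |‖x‖ - ‖x'‖| := by
          conv_lhs => rw [e]
          refine (norm_add_le _ _).trans ?_
          rw [norm_smul, norm_smul, b.n_unit, norm_norm, mul_one, Real.norm_eq_abs]
      _ ≤ t / r * ‖n s - n s'‖ + t / r * (R / r) * ‖n s - n s'‖ := by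
          gcongr; exact hb x hxt
      _ = t / r * (1 + R / r) * ‖n s - n s'‖ := by ring
      _ ≤ t / r * (1 + R / r) * (H / t) := by gcongr
      _ = _ := by field_simp
  have hc := (abs_coord_le (x - x') i).trans hxx
  have h1 := (hxm i).1
  have h2 := (hxm' i).2
  have h3 : x i - x' i ≤ H * ((1 + R / r) / r) := (le_abs_self _).trans hc
  have h4 : (H : ℝ) * (m i - m' i) < H * (1 + (1 + R / r) / r) := by linarith
  have h5 := lt_of_mul_lt_mul_left h4 hHr.le
  have h6 : ((m i - m' i : ℤ) : ℝ) ≤ ((D : ℤ) : ℝ) := by push_cast; linarith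
  have := Int.cast_le.1 h6
  linarith

lemma totCurv_mono (b : Body Ω γ γ' γ'' n L a r R) : Monotone (totCurv γ'') := by
  intro s s' h
  have : 0 ≤ ∫ v in s..s', ‖γ'' v‖ := intervalIntegral.integral_nonneg h fun _ _ => norm_nonneg _
  rw [← intervalIntegral.integral_interval_sub_left (b.ii 0 s').norm (b.ii 0 s).norm] at this
  simp only [totCurv]; linarith

/-- Boundary boxes with normal parameters in given arcs are counted by the total curvature of
those arcs. -/
lemma count_cells (b : Body Ω γ γ' γ'' n L a r R) : ∃ C : ℝ, 0 < C ∧ ∀ (H : ℕ) (t : ℝ)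
    (S : Finset (Fin 2 → ℤ)) (x : (Fin 2 → ℤ) → E2) (s : (Fin 2 → ℤ) → ℝ) (T : Finset ℕ)
    (e : ℕ → ℝ), 0 < H → 0 < t →
    (∀ m ∈ S, x m ∈ gridBox H m ∧ suppFn Ω (x m) = t ∧ x m = ‖x m‖ • n (s m)) →
    (∀ j ∈ T, e j ≤ e (j + 1)) → (∀ m ∈ S, ∃ j ∈ T, s m ∈ Icc (e j) (e (j + 1))) →
    (S.card : ℝ) ≤ C * ∑ j ∈ T, (t / H * (totCurv γ'' (e (j + 1)) - totCurv γ'' (e j)) + 2) := by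
  classical
  obtain ⟨D, hD⟩ := b.box_near
  refine ⟨((D : ℝ) + 1) ^ 2, by positivity, ?_⟩
  intro H t S x s T e hH ht hS he hcov
  have hHr : (0:ℝ) < H := by exact_mod_cast hH
  set f : ℝ → ℝ := fun u => t / H * totCurv γ'' u with hf
  have hfm : Monotone f := b.totCurv_mono.const_mul (by positivity)
  set ι : (Fin 2 → ℤ) → ℤ := fun m => ⌊f (s m)⌋ with hι
  have hfib : ∀ m m', ι m = ι m' → ‖n (s m) - n (s m')‖ ≤ H / t := by
    intro m m' hmm
    have h1 : |f (s m) - f (s m')| < 1 := Int.abs_sub_lt_one_of_floor_eq_floor hmm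
    have h2 : ‖n (s m) - n (s m')‖ ≤ |totCurv γ'' (s m) - totCurv γ'' (s m')| := by
      rcases le_total (s m) (s m') with h | h
      · refine (b.n_var h).trans ?_
        rw [abs_sub_comm]; exact le_abs_self _
      · rw [norm_sub_rev]
        exact (b.n_var h).trans (le_abs_self _)
    have h3 : f (s m) - f (s m') = t / H * (totCurv γ'' (s m) - totCurv γ'' (s m')) := by
      simp only [hf]; ring
    rw [h3, abs_mul, abs_of_pos (by positivity)] at h1
    rw [le_div_iff₀ ht]
    rw [div_mul_eq_mul_div, div_lt_one hHr] at h1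
    nlinarith
  have hcard : S.card ≤ (D + 1) ^ 2 * (S.image ι).card := by
    apply Finset.card_le_mul_card_image
    intro k _
    apply card_le_grid
    intro m hm m' hm' i
    rw [Finset.mem_filter] at hm hm'
    obtain ⟨h1, h2, h3⟩ := hS m hm.1
    obtain ⟨h1', h2', h3'⟩ := hS m' hm'.1
    exact hD H t m m' _ _ _ _ hH ht h1 h1' h2 h2' h3 h3' (hfib m m' (hm.2.trans hm'.2.symm)) i
  have himg : S.image ι ⊆ T.biUnion fun j => Finset.Icc ⌊f (e j)⌋ ⌊f (e (j + 1))⌋ := by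
    intro k hk
    obtain ⟨m, hm, rfl⟩ := Finset.mem_image.1 hk
    obtain ⟨j, hj, hsj⟩ := hcov m hm
    rw [Finset.mem_biUnion]
    refine ⟨j, hj, ?_⟩
    rw [Finset.mem_Icc]
    exact ⟨Int.floor_le_floor (hfm hsj.1), Int.floor_le_floor (hfm hsj.2)⟩
  have h2 : ((S.image ι).card : ℝ) ≤
      ∑ j ∈ T, (t / H * (totCurv γ'' (e (j + 1)) - totCurv γ'' (e j)) + 2) := by
    have h3 : (S.image ι).card ≤ ∑ j ∈ T, (Finset.Icc ⌊f (e j)⌋ ⌊f (e (j + 1))⌋).card :=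
      (Finset.card_le_card himg).trans Finset.card_biUnion_le
    calc ((S.image ι).card : ℝ) ≤ ((∑ j ∈ T, (Finset.Icc ⌊f (e j)⌋ ⌊f (e (j + 1))⌋).card : ℕ) : ℝ) := by
          exact_mod_cast h3
      _ = ∑ j ∈ T, ((Finset.Icc ⌊f (e j)⌋ ⌊f (e (j + 1))⌋).card : ℝ) := by push_cast; rfl
      _ ≤ _ := by
        apply Finset.sum_le_sum
        intro j hj
        rw [Int.card_Icc]
        have hle : ⌊f (e j)⌋ ≤ ⌊f (e (j + 1))⌋ := Int.floor_le_floor (hfm (he j hj))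
        have e1 : (((⌊f (e (j + 1))⌋ + 1 - ⌊f (e j)⌋).toNat : ℕ) : ℝ) =
            ⌊f (e (j + 1))⌋ + 1 - ⌊f (e j)⌋ := by
          have : (((⌊f (e (j + 1))⌋ + 1 - ⌊f (e j)⌋).toNat : ℕ) : ℤ) =
            ⌊f (e (j + 1))⌋ + 1 - ⌊f (e j)⌋ := Int.toNat_of_nonneg (by omega)
          exact_mod_cast this
        rw [e1]
        have g1 := Int.floor_le (f (e (j + 1)))
        have g2 := Int.lt_floor_add_one (f (e j))
        simp only [hf] at g1 g2 ⊢
        linarith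
  calc (S.card : ℝ) ≤ (((D + 1) ^ 2 * (S.image ι).card : ℕ) : ℝ) := by exact_mod_cast hcard
    _ = ((D : ℝ) + 1) ^ 2 * ((S.image ι).card : ℝ) := by push_cast; rfl
    _ ≤ _ := by gcongr

/-- Few cells of the parameter interval contain a bad normal: two boundary points almost orthogonal
to the same integer vector have a small cross product, so by `cross_ge` their parameters are close
once they are within `r / 2`. -/
lemma count_bad (b : Body Ω γ γ' γ'' n L a r R) : ∃ C : ℝ, 0 < C ∧ ∀ (N : ℕ) (T : Finset ℕ),
    1 ≤ N → (∀ j ∈ T, j < N ^ 5 ∧ ∃ s ∈ Icc (j * (L / (N:ℝ) ^ 5)) ((j + 1 : ℕ) * (L / (N:ℝ) ^ 5)),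
      BadDir R N (γ s)) → (T.card : ℝ) ≤ C * (N : ℝ) ^ 2 := by
  classical
  have hr := b.rpos
  have hR := b.Rpos
  have hL := b.Lpos
  obtain ⟨D, hD⟩ := exists_nat_ge (4 * R ^ 2 / (r * L) + 1)
  set B := ⌊L / (r / 2)⌋ with hB
  have hB0 : 0 ≤ B := Int.floor_nonneg.2 (by positivity)
  refine ⟨((D : ℝ) + 1) * 9 * (B + 1), by positivity, ?_⟩
  intro N T hN hT
  have hNr : (1:ℝ) ≤ N := by exact_mod_cast hN
  set J : ℝ := (N:ℝ) ^ 5 with hJ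
  have hJ0 : 0 < J := by positivity
  have hex : ∀ j : ℕ, ∃ (s : ℝ) (p : Fin 2 → ℤ), j ∈ T → s ∈ Icc (j * (L / J)) ((j + 1 : ℕ) * (L / J)) ∧
      s ∈ Icc 0 L ∧ p ≠ 0 ∧ (∀ i, |p i| ≤ N) ∧ |γ s 0 * p 0 + γ s 1 * p 1| ≤ R / J := by
    intro j
    by_cases hj : j ∈ T
    · obtain ⟨hjJ, s, hs, p, hp⟩ := hT j hj
      refine ⟨s, p, fun _ => ⟨hs, ⟨le_trans (by positivity) hs.1, hs.2.trans ?_⟩, hp⟩⟩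
      have : ((j + 1 : ℕ) : ℝ) ≤ J := by rw [hJ]; exact_mod_cast hjJ
      calc ((j + 1 : ℕ) : ℝ) * (L / J) ≤ J * (L / J) := by gcongr
        _ = L := by field_simp
    · exact ⟨0, 0, fun h => absurd h hj⟩
  choose s p hsp using hex
  set ι : ℕ → ℤ × ℤ × ℤ := fun j => (p j 0, p j 1, ⌊s j / (r / 2)⌋) with hι
  have himg : T.image ι ⊆ Finset.Icc (-(N:ℤ)) N ×ˢ Finset.Icc (-(N:ℤ)) N ×ˢ Finset.Icc 0 B := by
    intro k hk
    obtain ⟨j, hj, rfl⟩ := Finset.mem_image.1 hk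
    obtain ⟨_, hs, _, hp, _⟩ := hsp j hj
    simp only [hι, Finset.mem_product, Finset.mem_Icc]
    refine ⟨abs_le.1 (hp 0), abs_le.1 (hp 1), Int.floor_nonneg.2 (div_nonneg hs.1 (by positivity)),
      Int.floor_le_floor ?_⟩
    have := hs.2
    gcongr
  have hcimg : ((T.image ι).card : ℝ) ≤ 9 * N ^ 2 * (B + 1) := by
    have h1 := Finset.card_le_card himg
    rw [Finset.card_product, Finset.card_product, Int.card_Icc, Int.card_Icc] at h1
    have e1 : ((N:ℤ) + 1 - -(N:ℤ)).toNat = 2 * N + 1 := by omega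
    rw [e1] at h1
    have e2 : (((B + 1 - 0).toNat : ℕ) : ℝ) = B + 1 := by
      have : (((B + 1 - 0).toNat : ℕ) : ℤ) = B + 1 := by omega
      exact_mod_cast this
    have h2 : ((T.image ι).card : ℝ) ≤ (2 * N + 1) * ((2 * N + 1) * (((B + 1 - 0).toNat : ℕ) : ℝ)) := by
      exact_mod_cast h1
    rw [e2] at h2
    have hB1 : (0:ℝ) ≤ B + 1 := by positivity
    calc ((T.image ι).card : ℝ) ≤ (2 * N + 1) * ((2 * N + 1) * (B + 1)) := h2
      _ ≤ (3 * N) * ((3 * N) * (B + 1)) := by gcongr <;> linarith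
      _ = _ := by ring
  -- two bad parameters with the same integer vector, in the same arc of length `r / 2`, are close
  have hpair : ∀ j ∈ T, ∀ j' ∈ T, ι j = ι j' → s j ≤ s j' → s j' - s j ≤ 4 * R ^ 2 / r / J := by
    intro j hj j' hj' hjj hle
    obtain ⟨_, _, hp0, _, hα⟩ := hsp j hj
    obtain ⟨_, _, _, _, hβ⟩ := hsp j' hj'
    simp only [hι, Prod.mk.injEq] at hjj
    obtain ⟨q0, q1, hfl⟩ := hjj
    rw [← q0, ← q1] at hβ
    have hclose : s j' - s j ≤ r / 2 := by
      have h1 := Int.abs_sub_lt_one_of_floor_eq_floor hfl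
      rw [← sub_div, abs_div, abs_of_pos (show 0 < r / 2 by positivity),
        div_lt_one (by positivity), abs_sub_comm] at h1
      exact (le_abs_self _).trans h1.le
    have hcr := b.cross_ge hle hclose
    have hc0 : ∀ u i, |γ u i| ≤ R := fun u i => (abs_coord_le _ _).trans (b.norm_le u)
    set X := γ (s j) 0 * γ (s j') 1 - γ (s j) 1 * γ (s j') 0 with hX
    set α := γ (s j) 0 * p j 0 + γ (s j) 1 * p j 1 with hαd
    set β := γ (s j') 0 * p j 0 + γ (s j') 1 * p j 1 with hβd
    have hbil : ∀ u v : ℝ, |u| ≤ R → |v| ≤ R → |α * u - v * β| ≤ 2 * R ^ 2 / J := by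
      intro u v hu hv
      calc |α * u - v * β| ≤ |α| * |u| + |v| * |β| := by
            rw [← abs_mul, ← abs_mul]; exact abs_sub _ _
        _ ≤ R / J * R + R * (R / J) := by gcongr
        _ = _ := by ring
    have hXb : |X| ≤ 2 * R ^ 2 / J := by
      have hone : ∀ z : ℤ, z ≠ 0 → (1:ℝ) ≤ |(z:ℝ)| := by
        intro z hz
        exact_mod_cast Int.one_le_abs hz
      by_cases h0 : p j 0 = 0
      · have h1 : p j 1 ≠ 0 := by
          intro h1
          apply hp0
          funext i; fin_cases i
          · exact h0
          · exact h1
        have e : X * p j 1 = -(α * γ (s j') 0 - γ (s j) 0 * β) := by rw [hX, hαd, hβd]; ring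
        calc |X| ≤ |X| * |(p j 1 : ℝ)| := le_mul_of_one_le_right (abs_nonneg _) (hone _ h1)
          _ = |α * γ (s j') 0 - γ (s j) 0 * β| := by rw [← abs_mul, e, abs_neg]
          _ ≤ _ := hbil _ _ (hc0 _ _) (hc0 _ _)
      · have e : X * p j 0 = α * γ (s j') 1 - γ (s j) 1 * β := by rw [hX, hαd, hβd]; ring
        calc |X| ≤ |X| * |(p j 0 : ℝ)| := le_mul_of_one_le_right (abs_nonneg _) (hone _ h0)
          _ = |α * γ (s j') 1 - γ (s j) 1 * β| := by rw [← abs_mul, e]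
          _ ≤ _ := hbil _ _ (hc0 _ _) (hc0 _ _)
    have h6 : r / 2 * (s j' - s j) ≤ 2 * R ^ 2 / J := hcr.trans hXb
    rw [div_div, le_div_iff₀ (by positivity)]
    rw [le_div_iff₀ hJ0] at h6
    linarith
  have hcard : T.card ≤ (D + 1) * (T.image ι).card := by
    apply Finset.card_le_mul_card_image
    intro k _
    apply card_le_of_close_nat
    intro j hj j' hj'
    rw [Finset.mem_filter] at hj hj'
    obtain ⟨hs, _⟩ := hsp j hj.1
    obtain ⟨hs', _⟩ := hsp j' hj'.1
    have hss : s j' - s j ≤ 4 * R ^ 2 / r / J := by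
      rcases le_total (s j) (s j') with h | h
      · exact hpair j hj.1 j' hj'.1 (hj.2.trans hj'.2.symm) h
      · exact (by linarith : s j' - s j ≤ 0).trans (by positivity)
    have h1 : ((j' : ℝ) - j - 1) * (L / J) ≤ 4 * R ^ 2 / r / J := by
      have := hs.2; have := hs'.1
      push_cast at *
      linarith
    have h2 : (j' : ℝ) - j - 1 ≤ 4 * R ^ 2 / (r * L) := by
      rw [le_div_iff₀ (by positivity)]
      rw [← mul_div_assoc, div_le_div_iff_of_pos_right hJ0, le_div_iff₀ hr] at h1
      linarith
    have h3 : (j' : ℝ) ≤ ((j + D : ℕ) : ℝ) := by push_cast; linarith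
    exact_mod_cast h3
  calc (T.card : ℝ) ≤ (((D + 1) * (T.image ι).card : ℕ) : ℝ) := by exact_mod_cast hcard
    _ = ((D : ℝ) + 1) * ((T.image ι).card : ℝ) := by push_cast; rfl
    _ ≤ ((D : ℝ) + 1) * (9 * N ^ 2 * (B + 1)) := by gcongr
    _ = _ := by ring

end Body

/-! ### Summation over the boxes -/

/-- Truncation at height `N`, with the excess controlled by the `L log^g L` weight. -/
lemma trunc_le {g : ℝ} (hg : 0 < g) {k : ℝ} (hk : 0 ≤ k) (N : ℕ) :
    k ≤ N + Real.log (2 + N) ^ (-g) * (k * Real.log (2 + k) ^ g) := by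
  have hN : (0:ℝ) ≤ N := Nat.cast_nonneg N
  have hlN : 0 < Real.log (2 + N) := Real.log_pos (by linarith)
  have hlk : 0 < Real.log (2 + k) := Real.log_pos (by linarith)
  rcases le_total k N with h | h
  · have : 0 ≤ Real.log (2 + N) ^ (-g) * (k * Real.log (2 + k) ^ g) := by positivity
    linarith
  · have h1 : Real.log (2 + N) ^ g ≤ Real.log (2 + k) ^ g := by gcongr
    have h2 : 1 ≤ Real.log (2 + N) ^ (-g) * Real.log (2 + k) ^ g := by
      rw [Real.rpow_neg hlN.le, ← div_eq_inv_mul, le_div_iff₀ (by positivity), one_mul]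
      exact h1
    nlinarith

namespace Body

variable {Ω : Set E2} {γ γ' γ'' n : ℝ → E2} {L a r R : ℝ}

/-- Total curvature of a set of cells of length `L / N ^ 5`, by truncation of the curvature at
height `N`. -/
lemma curv_cells (b : Body Ω γ γ' γ'' n L a r R) {g : ℝ} (hg : 0 < g)
    (hLlogL : IntegrableOn
      (fun t => ‖γ'' t‖ * Real.log (2 + ‖γ'' t‖) ^ g) (Set.Icc 0 L)) :
    ∃ I : ℝ, 0 ≤ I ∧ ∀ (N : ℕ) (T : Finset ℕ), 1 ≤ N → T ⊆ Finset.range (N ^ 5) →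
      ∑ j ∈ T, (totCurv γ'' ((j + 1 : ℕ) * (L / (N:ℝ) ^ 5)) - totCurv γ'' (j * (L / (N:ℝ) ^ 5))) ≤
        T.card * (L / (N : ℝ) ^ 4) + Real.log (2 + N) ^ (-g) * I := by
  set w : ℝ → ℝ := fun t => ‖γ'' t‖ * Real.log (2 + ‖γ'' t‖) ^ g with hw
  have hw0 : ∀ t, 0 ≤ w t := fun t =>
    mul_nonneg (norm_nonneg _) (Real.rpow_nonneg (Real.log_nonneg (by linarith [norm_nonneg (γ'' t)])) _)
  have hL := b.Lpos
  refine ⟨∫ t in (0:ℝ)..L, w t, intervalIntegral.integral_nonneg hL.le fun t _ => hw0 t, ?_⟩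
  intro N T hN hT
  have hNr : (1:ℝ) ≤ N := by exact_mod_cast hN
  set e : ℕ → ℝ := fun j => j * (L / (N:ℝ) ^ 5) with he
  have hstep : ∀ j, e (j + 1) - e j = L / (N:ℝ) ^ 5 := by intro j; simp only [he]; push_cast; ring
  have hle : ∀ j, e j ≤ e (j + 1) := fun j => by
    have : 0 < L / (N:ℝ) ^ 5 := by positivity
    linarith [hstep j]
  have hmono : Monotone e := monotone_nat_of_le_succ hle
  have he0 : e 0 = 0 := by simp [he]
  have heJ : e (N ^ 5) = L := by simp only [he]; push_cast; field_simp
  have hwi : ∀ j ∈ Finset.range (N ^ 5), IntervalIntegrable w volume (e j) (e (j + 1)) := by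
    intro j hj
    rw [intervalIntegrable_iff_integrableOn_Icc_of_le (hle j)]
    refine hLlogL.mono_set (Icc_subset_Icc ?_ ?_)
    · rw [← he0]; exact hmono (Nat.zero_le _)
    · rw [← heJ]; exact hmono (Finset.mem_range.1 hj)
  have hlog : 0 ≤ Real.log (2 + N) ^ (-g) :=
    Real.rpow_nonneg (Real.log_nonneg (by linarith)) _
  have hcell : ∀ j ∈ T, totCurv γ'' (e (j + 1)) - totCurv γ'' (e j) ≤
      L / (N : ℝ) ^ 4 + Real.log (2 + N) ^ (-g) * ∫ v in (e j)..(e (j + 1)), w v := by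
    intro j hj
    rw [totCurv, totCurv,
      intervalIntegral.integral_interval_sub_left (b.ii _ _).norm (b.ii _ _).norm]
    have hi := (hwi j (hT hj)).const_mul (Real.log (2 + N) ^ (-g))
    calc ∫ v in (e j)..(e (j + 1)), ‖γ'' v‖
        ≤ ∫ v in (e j)..(e (j + 1)), ((N:ℝ) + Real.log (2 + N) ^ (-g) * w v) :=
          intervalIntegral.integral_mono_on (hle j) (b.ii _ _).norm
            (intervalIntegrable_const.add hi) fun v _ => trunc_le hg (norm_nonneg _) N
      _ = _ := by
          rw [intervalIntegral.integral_add intervalIntegrable_const hi,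
            intervalIntegral.integral_const, intervalIntegral.integral_const_mul, hstep]
          congr 1
          simp; field_simp
  calc _ ≤ ∑ j ∈ T, (L / (N : ℝ) ^ 4 + Real.log (2 + N) ^ (-g) * ∫ v in (e j)..(e (j + 1)), w v) :=
        Finset.sum_le_sum hcell
    _ = T.card * (L / (N : ℝ) ^ 4) +
        Real.log (2 + N) ^ (-g) * ∑ j ∈ T, ∫ v in (e j)..(e (j + 1)), w v := by
        rw [Finset.sum_add_distrib, Finset.sum_const, nsmul_eq_mul, Finset.mul_sum]
    _ ≤ _ := by
        gcongr
        calc ∑ j ∈ T, ∫ v in (e j)..(e (j + 1)), w v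
            ≤ ∑ j ∈ Finset.range (N ^ 5), ∫ v in (e j)..(e (j + 1)), w v :=
              Finset.sum_le_sum_of_subset_of_nonneg hT fun j _ _ =>
                intervalIntegral.integral_nonneg (hle j) fun v _ => hw0 v
          _ = ∫ v in (0:ℝ)..L, w v := by
              rw [intervalIntegral.sum_integral_adjacent_intervals, he0, heJ]
              exact fun k hk => hwi k (Finset.mem_range.2 hk)

/-- The lattice rest is the sum of the discrepancies over the boxes that cover the dilated polar
set. -/
lemma rest_eq (b : Body Ω γ γ' γ'' n L a r R) {t : ℝ} (ht : 0 < t) {H : ℕ} (hH : 0 < H) :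
    ∃ F : Finset (Fin 2 → ℤ), latticeRest (polarSet Ω) t =
      ∑ m ∈ F, boxDev {x | suppFn Ω x ≤ t} H m := by
  set K := {x | suppFn Ω x ≤ t} with hK
  have hKm : MeasurableSet K :=
    (isClosed_le (supp_cont b.zero_mem b.le_R) continuous_const).measurableSet
  have hKn : ∀ x ∈ K, ‖x‖ ≤ t / r := by
    intro x hx
    rw [le_div_iff₀ b.rpos, mul_comm]
    exact (norm_le_supp b.rpos b.ball b.le_R x).trans hx
  have hKb : Bornology.IsBounded K :=
    (Metric.isBounded_closedBall (x := (0:E2)) (r := t / r)).subset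
      fun y hy => by simpa using hKn y hy
  obtain ⟨M, hM⟩ := exists_nat_ge (t / r + 1)
  refine ⟨Fintype.piFinset fun _ => Finset.Icc (-(M:ℤ)) M, ?_⟩
  have hcov : ∀ x ∈ K, ∃ m ∈ Fintype.piFinset fun _ => Finset.Icc (-(M:ℤ)) M, x ∈ gridBox H m := by
    intro x hx
    refine ⟨fun i => ⌊(x i + 1 / 2) / H⌋, ?_, (mem_gridBox_iff hH _ x).2 fun _ => rfl⟩
    rw [Fintype.mem_piFinset]
    intro i
    have h1 := (abs_coord_le x i).trans (hKn x hx)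
    rw [abs_le] at h1
    have hHr : (1:ℝ) ≤ H := by exact_mod_cast hH
    have hM0 : (0:ℝ) ≤ M := Nat.cast_nonneg M
    rw [Finset.mem_Icc]
    constructor
    · rw [Int.le_floor, le_div_iff₀ (by linarith)]
      push_cast
      nlinarith
    · have : ((⌊(x i + 1 / 2) / (H:ℝ)⌋ : ℤ) : ℝ) ≤ ((M : ℤ) : ℝ) := by
        refine (Int.floor_le _).trans ?_
        rw [div_le_iff₀ (by linarith)]
        push_cast
        nlinarith
      exact_mod_cast this
  simp only [boxDev]
  rw [Finset.sum_sub_distrib, ← tile_sum latMeas hH hKm (latMeas_lt_top hKb) _ hcov,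
    ← tile_sum volume hH hKm hKb.measure_lt_top _ hcov, latMeas_real hKm, latticeRest,
    smul_polar b.zero_mem b.le_R ht]
  congr 1
  rw [hK, ← smul_polar b.zero_mem b.le_R ht, measureReal_def, Measure.addHaar_smul]
  have hsq : (ENNReal.ofReal (t ^ 2)).toReal = t ^ 2 := ENNReal.toReal_ofReal (by positivity)
  simp [abs_of_pos ht, hsq]

/-- The lattice rest in terms of the scale parameter `N ≈ t ^ (1 / 13)`. -/
lemma rest_bound (b : Body Ω γ γ' γ'' n L a r R) {g : ℝ} (hg : 0 < g)
    (hLlogL : IntegrableOn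
      (fun t => ‖γ'' t‖ * Real.log (2 + ‖γ'' t‖) ^ g) (Set.Icc 0 L)) :
    ∃ C : ℝ, 0 < C ∧ ∀ (N : ℕ) (t : ℝ), 1 ≤ N → (N : ℝ) ^ 13 ≤ t →
      |latticeRest (polarSet Ω) t| ≤ C * t * (1 / N + Real.log (2 + N) ^ (-g)) := by
  classical
  obtain ⟨C1, hC1, hbox⟩ := b.box_bound
  obtain ⟨C2, hC2, hcnt⟩ := b.count_cells
  obtain ⟨C3, hC3, hbadc⟩ := b.count_bad
  obtain ⟨I, hI, hcurv⟩ := b.curv_cells hg hLlogL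
  have hL := b.Lpos
  set K0 := totCurv γ'' L with hK0
  have hK00 : 0 ≤ K0 := intervalIntegral.integral_nonneg hL.le fun _ _ => norm_nonneg _
  refine ⟨C1 * C2 * (K0 + 2 + C3 * L + I + 2 * C3), by positivity, ?_⟩
  intro N t hN hNt
  have hNr : (1:ℝ) ≤ N := by exact_mod_cast hN
  have ht : 0 < t := lt_of_lt_of_le (by positivity) hNt
  have hH : 0 < N ^ 6 := by positivity
  have hHr : (((N ^ 6 : ℕ)) : ℝ) = (N:ℝ) ^ 6 := by push_cast; rfl
  obtain ⟨F, hF⟩ := b.rest_eq ht hH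
  set K := {x | suppFn Ω x ≤ t} with hK
  have hex : ∀ m : Fin 2 → ℤ, ∃ (x : E2) (s : ℝ), boxDev K (N ^ 6) m ≠ 0 →
      x ∈ gridBox (N ^ 6) m ∧ suppFn Ω x = t ∧ x ≠ 0 ∧ s ∈ Ico 0 L ∧ x = ‖x‖ • n s := by
    intro m
    by_cases hm : boxDev K (N ^ 6) m = 0
    · exact ⟨0, 0, fun h => absurd hm h⟩
    · obtain ⟨x, hx, hxt⟩ := box_boundary (N ^ 6) m (suppFn Ω) (supp_cont b.zero_mem b.le_R) t hm
      have hx0 : x ≠ 0 := by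
        rintro rfl
        have := supp_le_norm b.zero_mem b.le_R (0:E2)
        rw [norm_zero, mul_zero] at this
        linarith
      obtain ⟨s, hs, hxs⟩ := b.exists_dir hx0
      exact ⟨x, s, fun _ => ⟨hx, hxt, hx0, hs, hxs⟩⟩
  choose x s hxs using hex
  set S := F.filter fun m => boxDev K (N ^ 6) m ≠ 0 with hS
  set Sb := S.filter fun m => BadDir R N (γ (s m)) with hSb
  have hSm : ∀ m ∈ S, boxDev K (N ^ 6) m ≠ 0 := fun m hm => (Finset.mem_filter.1 hm).2
  have hdat : ∀ m ∈ S, x m ∈ gridBox (N ^ 6) m ∧ suppFn Ω (x m) = t ∧ x m = ‖x m‖ • n (s m) := by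
    intro m hm
    obtain ⟨h1, h2, _, _, h3⟩ := hxs m (hSm m hm)
    exact ⟨h1, h2, h3⟩
  have hsum : |latticeRest (polarSet Ω) t| ≤
      S.card * (C1 * (N:ℝ) ^ 5) + Sb.card * (C1 * (N:ℝ) ^ 6) := by
    rw [hF]
    have e1 : ∑ m ∈ F, boxDev K (N ^ 6) m = ∑ m ∈ S, boxDev K (N ^ 6) m :=
      (Finset.sum_filter_ne_zero F).symm
    rw [e1]
    calc |∑ m ∈ S, boxDev K (N ^ 6) m| ≤ ∑ m ∈ S, |boxDev K (N ^ 6) m| :=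
          Finset.abs_sum_le_sum_abs _ _
      _ ≤ ∑ m ∈ S, (C1 * (N:ℝ) ^ 5 + if BadDir R N (γ (s m)) then C1 * (N:ℝ) ^ 6 else 0) := by
          apply Finset.sum_le_sum
          intro m hm
          obtain ⟨h1, h2, h0, hs, h3⟩ := hxs m (hSm m hm)
          obtain ⟨k1, k2⟩ := hbox N t m (x m) (s m) hN hNt h1 h2 (Ico_subset_Icc_self hs) h0 h3
          have : 0 < C1 * (N:ℝ) ^ 5 := by positivity
          split_ifs with hb
          · linarith
          · linarith [k2 hb]
      _ = _ := by
          rw [Finset.sum_add_distrib, Finset.sum_const, nsmul_eq_mul, ← Finset.sum_filter,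
            Finset.sum_const, nsmul_eq_mul]
  have hall : (S.card : ℝ) ≤ C2 * (t / (N:ℝ) ^ 6 * K0 + 2) := by
    have := hcnt (N ^ 6) t S x s {0} (fun j => j * L) hH ht hdat (by simp [hL.le]) (by
      intro m hm
      obtain ⟨_, _, _, hs, _⟩ := hxs m (hSm m hm)
      refine ⟨0, by simp, ?_⟩
      simpa using Ico_subset_Icc_self hs)
    rw [hHr] at this
    have e0 : totCurv γ'' 0 = 0 := by simp [totCurv]
    simpa [e0, ← hK0] using this
  -- the cells of length `L / N ^ 5` that contain a bad normal
  set e : ℕ → ℝ := fun j => j * (L / (N:ℝ) ^ 5) with he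
  set T := (Finset.range (N ^ 5)).filter fun j => ∃ u ∈ Icc (e j) (e (j + 1)), BadDir R N (γ u) with hT
  have hTsub : T ⊆ Finset.range (N ^ 5) := Finset.filter_subset _ _
  have hTc : (T.card : ℝ) ≤ C3 * (N:ℝ) ^ 2 := by
    apply hbadc N T hN
    intro j hj
    rw [hT, Finset.mem_filter, Finset.mem_range] at hj
    exact hj
  have hbad : (Sb.card : ℝ) ≤ C2 * (t / (N:ℝ) ^ 6 *
      (T.card * (L / (N : ℝ) ^ 4) + Real.log (2 + N) ^ (-g) * I) + 2 * T.card) := by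
    have h1 := hcnt (N ^ 6) t Sb x s T e hH ht (fun m hm => hdat m (Finset.mem_filter.1 hm).1) (by
      intro j _
      simp only [he]; push_cast
      gcongr
      linarith) (by
      intro m hm
      rw [hSb, Finset.mem_filter] at hm
      obtain ⟨_, _, _, hs, _⟩ := hxs m (hSm m hm.1)
      have hd : 0 < L / (N:ℝ) ^ 5 := by positivity
      set j := ⌊s m / (L / (N:ℝ) ^ 5)⌋₊ with hj
      have hj1 : (j : ℝ) * (L / (N:ℝ) ^ 5) ≤ s m := by
        rw [← le_div_iff₀ hd]; exact Nat.floor_le (div_nonneg hs.1 hd.le)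
      have hj2 : s m < ((j + 1 : ℕ) : ℝ) * (L / (N:ℝ) ^ 5) := by
        rw [← div_lt_iff₀ hd]; push_cast; exact Nat.lt_floor_add_one _
      have hmem : s m ∈ Icc (e j) (e (j + 1)) := ⟨hj1, hj2.le⟩
      refine ⟨j, ?_, hmem⟩
      rw [hT, Finset.mem_filter, Finset.mem_range]
      refine ⟨?_, s m, hmem, hm.2⟩
      have h3 : (j : ℝ) * (L / (N:ℝ) ^ 5) < (N:ℝ) ^ 5 * (L / (N:ℝ) ^ 5) := by
        have : (N:ℝ) ^ 5 * (L / (N:ℝ) ^ 5) = L := by field_simp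
        rw [this]; exact hj1.trans_lt hs.2
      have h4 := lt_of_mul_lt_mul_right h3 hd.le
      exact_mod_cast h4)
    rw [hHr, Finset.sum_add_distrib, ← Finset.mul_sum, Finset.sum_const, nsmul_eq_mul] at h1
    refine h1.trans ?_
    have h2 := hcurv N T hN hTsub
    rw [mul_comm (T.card : ℝ) 2]
    gcongr
  set lg := Real.log (2 + N) ^ (-g) with hlg
  have hlg0 : 0 ≤ lg := Real.rpow_nonneg (Real.log_nonneg (by linarith)) _
  have hp : ∀ k : ℕ, k ≤ 12 → (N:ℝ) ^ k ≤ t * (1 / N) := by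
    intro k hk
    rw [mul_one_div, le_div_iff₀ (by linarith), ← pow_succ]
    exact (pow_le_pow_right₀ hNr (by omega)).trans hNt
  have hA : S.card * (C1 * (N:ℝ) ^ 5) ≤ C1 * C2 * (K0 + 2) * (t * (1 / N)) := by
    calc S.card * (C1 * (N:ℝ) ^ 5) ≤ C2 * (t / (N:ℝ) ^ 6 * K0 + 2) * (C1 * (N:ℝ) ^ 5) := by gcongr
      _ = C1 * C2 * (K0 * (t * (1 / N)) + 2 * (N:ℝ) ^ 5) := by field_simp
      _ ≤ C1 * C2 * (K0 * (t * (1 / N)) + 2 * (t * (1 / N))) := by gcongr; exact hp 5 (by norm_num)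
      _ = _ := by ring
  have hBd : Sb.card * (C1 * (N:ℝ) ^ 6) ≤
      C1 * C2 * ((C3 * L + 2 * C3) * (t * (1 / N)) + I * (t * lg)) := by
    calc Sb.card * (C1 * (N:ℝ) ^ 6)
        ≤ C2 * (t / (N:ℝ) ^ 6 * (C3 * (N:ℝ) ^ 2 * (L / (N : ℝ) ^ 4) + lg * I)
          + 2 * (C3 * (N:ℝ) ^ 2)) * (C1 * (N:ℝ) ^ 6) := by
          gcongr
          refine hbad.trans ?_
          gcongr
      _ = C1 * C2 * (C3 * L * (t * (1 / (N:ℝ) ^ 2)) + 2 * C3 * (N:ℝ) ^ 8 + I * (t * lg)) := by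
          field_simp; ring
      _ ≤ C1 * C2 * (C3 * L * (t * (1 / N)) + 2 * C3 * (t * (1 / N)) + I * (t * lg)) := by
          gcongr
          · nlinarith
          · exact hp 8 (by norm_num)
      _ = _ := by ring
  have hq1 : 0 ≤ t * (1 / (N:ℝ)) := by positivity
  have hq2 : 0 ≤ t * lg := by positivity
  have hCC : 0 < C1 * C2 := by positivity
  refine hsum.trans ((add_le_add hA hBd).trans ?_)
  have : C1 * C2 * (K0 + 2 + C3 * L + I + 2 * C3) * t * (1 / N + lg) -
      (C1 * C2 * (K0 + 2) * (t * (1 / N)) +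
        C1 * C2 * ((C3 * L + 2 * C3) * (t * (1 / N)) + I * (t * lg))) =
      C1 * C2 * (I * (t * (1 / N)) + (K0 + 2 + C3 * L + 2 * C3) * (t * lg)) := by ring
  have h0 : 0 ≤ C1 * C2 * (I * (t * (1 / N)) + (K0 + 2 + C3 * L + 2 * C3) * (t * lg)) := by positivity
  linarith

end Body

/-! ### The choice of scale -/

/-- The error `1 / N` is dominated by any negative power of the logarithm. -/
lemma inv_le_log_rpow {g : ℝ} (hg : 0 < g) : ∃ C : ℝ, 0 < C ∧ ∀ N : ℕ, 1 ≤ N →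
    1 / (N:ℝ) ≤ C * Real.log (2 + N) ^ (-g) := by
  refine ⟨3 * g ^ g, by positivity, ?_⟩
  intro N hN
  have hNr : (1:ℝ) ≤ N := by exact_mod_cast hN
  have hl : 0 < Real.log (2 + N) := Real.log_pos (by linarith)
  have h1 : Real.log (2 + N) ≤ (2 + (N:ℝ)) ^ (1 / g) * g := by
    have := Real.log_le_rpow_div (show (0:ℝ) ≤ 2 + N by linarith) (show 0 < 1 / g by positivity)
    rwa [div_div_eq_mul_div, div_one] at this
  have h2 : Real.log (2 + N) ^ g ≤ 3 * g ^ g * N := by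
    calc Real.log (2 + N) ^ g ≤ ((2 + (N:ℝ)) ^ (1 / g) * g) ^ g := by gcongr
      _ = (2 + N) * g ^ g := by
        rw [Real.mul_rpow (by positivity) hg.le, ← Real.rpow_mul (by positivity),
          one_div_mul_cancel hg.ne', Real.rpow_one]
      _ ≤ (3 * N) * g ^ g := by gcongr; linarith
      _ = _ := by ring
  rw [Real.rpow_neg hl.le, ← div_eq_mul_inv, div_le_div_iff₀ (by linarith) (by positivity)]
  linarith

/-- The scale `N = ⌊t ^ (1 / 13)⌋`. -/
lemma exists_scale {t : ℝ} (ht : 2 ≤ t) : ∃ N : ℕ, 1 ≤ N ∧ (N:ℝ) ^ 13 ≤ t ∧ t ≤ (2 + (N:ℝ)) ^ 13 := by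
  have h0 : 0 ≤ t := by linarith
  have hroot : (t ^ ((1:ℝ) / 13)) ^ 13 = t := by
    rw [← Real.rpow_natCast, ← Real.rpow_mul h0]; norm_num
  have hr0 : 0 ≤ t ^ ((1:ℝ) / 13) := by positivity
  refine ⟨⌊t ^ ((1:ℝ) / 13)⌋₊, ?_, ?_, ?_⟩
  · rw [Nat.one_le_floor_iff]
    exact Real.one_le_rpow (by linarith) (by norm_num)
  · conv_rhs => rw [← hroot]
    gcongr
    exact Nat.floor_le hr0
  · conv_lhs => rw [← hroot]
    gcongr
    have := Nat.lt_floor_add_one (t ^ ((1:ℝ) / 13))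
    linarith

/-- Proposition 5.1: if `Ω` is a bounded open convex planar domain containing
the origin, with `C¹` boundary, absolutely continuous unit tangent, curvature
`κ = ‖γ''‖ ≥ a > 0` a.e. and `κ ∈ L log^γ L(∂Ω)`, then the lattice rest of the polar set
satisfies `|E_{Ω*}(t)| ≤ C t (log t)^{−γ/2}` for all `t ≥ 2`. -/
theorem statement8 (Ω : Set E2) (hconv : Convex ℝ Ω) (hopen : IsOpen Ω)
    (hbdd : Bornology.IsBounded Ω) (h0 : (0 : E2) ∈ Ω)
    (γ γ' γ'' : ℝ → E2) (L : ℝ) (hbp : BoundaryParam Ω γ γ' γ'' L)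
    (a g : ℝ) (ha : 0 < a) (hg : 0 < g)
    (hlow : ∀ᵐ t ∂(volume.restrict (Set.Icc 0 L)), a ≤ ‖γ'' t‖)
    (hLlogL : IntegrableOn
      (fun t => ‖γ'' t‖ * Real.log (2 + ‖γ'' t‖) ^ g) (Set.Icc 0 L)) :
    ∃ C : ℝ, ∀ t : ℝ, 2 ≤ t →
      |latticeRest (polarSet Ω) t| ≤ C * t * Real.log t ^ (-(g / 2)) := by
  obtain ⟨n, r, R, b⟩ := exists_body hconv hopen hbdd h0 hbp ha hlow
  obtain ⟨C, hC, hrest⟩ := b.rest_bound hg hLlogL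
  obtain ⟨C', hC', hinv⟩ := inv_le_log_rpow hg
  refine ⟨C * (C' + 1) * 13 ^ g * Real.log 2 ^ (-(g / 2)), ?_⟩
  intro t ht
  obtain ⟨N, hN, hNt, htN⟩ := exists_scale ht
  have hNr : (1:ℝ) ≤ N := by exact_mod_cast hN
  have hlt : 0 < Real.log t := Real.log_pos (by linarith)
  have hl2 : 0 < Real.log 2 := Real.log_pos (by norm_num)
  have hlog : Real.log t / 13 ≤ Real.log (2 + N) := by
    have := Real.log_le_log (by linarith) htN
    rw [Real.log_pow] at this
    push_cast at this
    linarith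
  have h1 : Real.log (2 + N) ^ (-g) ≤ 13 ^ g * Real.log t ^ (-g) := by
    calc Real.log (2 + N) ^ (-g) ≤ (Real.log t / 13) ^ (-g) :=
          Real.rpow_le_rpow_of_nonpos (by positivity) hlog (by linarith)
      _ = _ := by
        rw [Real.div_rpow hlt.le (by norm_num), Real.rpow_neg (by norm_num : (0:ℝ) ≤ 13),
          div_inv_eq_mul, mul_comm]
  have h2 : Real.log t ^ (-g) ≤ Real.log 2 ^ (-(g / 2)) * Real.log t ^ (-(g / 2)) := by
    have e : -g = -(g / 2) + -(g / 2) := by ring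
    rw [e, Real.rpow_add hlt]
    gcongr ?_ * _
    exact Real.rpow_le_rpow_of_nonpos hl2 (Real.log_le_log (by norm_num) ht) (by linarith)
  calc |latticeRest (polarSet Ω) t| ≤ C * t * (1 / N + Real.log (2 + N) ^ (-g)) := hrest N t hN hNt
    _ ≤ C * t * (C' * Real.log (2 + N) ^ (-g) + Real.log (2 + N) ^ (-g)) := by
        gcongr; exact hinv N hN
    _ = C * t * ((C' + 1) * Real.log (2 + N) ^ (-g)) := by ring
    _ ≤ C * t * ((C' + 1) * (13 ^ g * (Real.log 2 ^ (-(g / 2)) * Real.log t ^ (-(g / 2))))) := by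
        gcongr
        refine h1.trans ?_
        gcongr
    _ = _ := by ring

end
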